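/- arXiv:0811.0103 — 4 statements merged into one kernel-verified Lean document; each statement's English description precedes it below -/
import Mathlib

section
/- Let n ≥ 1 and let P₀,…,P_n, Q ∈ ℂ[t₁,…,t_n] with Q ≠ 0, and set S = supp(Q) ∪ supp(P₀) ∪ ⋯ ∪ supp(P_n) ⊂ ℕⁿ (the union of the supports of the polynomials x_iQ − P_i, viewed as subsets of ℝⁿ). Assume that the kernel of the ℂ-algebra homomorphism ℂ[x₀,…,x_n] → ℂ(t₁,…,t_n) sending x_i to P_i/Q is a nonzero principal ideal generated by φ. Then the total degree of φ is at most n! times the n-dimensional Lebesgue volume of the convex hull of S in ℝⁿ. -/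
/-- The support of a multivariate polynomial, viewed as a subset of `ℝⁿ`. -/
noncomputable def suppSet (n : ℕ) (p : MvPolynomial (Fin n) ℂ) : Set (Fin n → ℝ) :=
  (fun d : Fin n →₀ ℕ => fun i => (d i : ℝ)) '' ↑p.support


namespace ImplicitDeg

open MvPolynomial Pointwise

/-- the real vector attached to an exponent vector -/
noncomputable def toR (n : ℕ) (d : Fin n →₀ ℕ) : Fin n → ℝ := fun i => (d i : ℝ)

lemma toR_inj (n : ℕ) : Function.Injective (toR n) := by
  intro a b h
  ext i
  have := congrFun h i
  simpa [toR] using this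

lemma toR_add (n : ℕ) (a b : Fin n →₀ ℕ) : toR n (a + b) = toR n a + toR n b := by
  ext i; simp [toR]

/-- exponents lying in the dilated set -/
def T (n : ℕ) (K : Set (Fin n → ℝ)) (m : ℕ) : Set (Fin n →₀ ℕ) :=
  {s | toR n s ∈ (m : ℝ) • K}

lemma mul_mem (n : ℕ) {K : Set (Fin n → ℝ)} (hK : Convex ℝ K) {a b : ℕ}
    {f g : MvPolynomial (Fin n) ℂ}
    (hf : f ∈ restrictSupport ℂ (T n K a)) (hg : g ∈ restrictSupport ℂ (T n K b)) :
    f * g ∈ restrictSupport ℂ (T n K (a + b)) := by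
  classical
  rw [mem_restrictSupport_iff] at *
  intro s hs
  have h1 := MvPolynomial.support_mul f g hs
  obtain ⟨u, hu, v, hv, rfl⟩ := Finset.mem_add.1 h1
  have hu' := hf hu
  have hv' := hg hv
  simp only [T, Set.mem_ofPred_eq] at *
  rw [toR_add, Nat.cast_add, hK.add_smul (by positivity) (by positivity)]
  exact Set.add_mem_add hu' hv'

lemma one_mem (n : ℕ) {K : Set (Fin n → ℝ)} (hK : K.Nonempty) :
    (1 : MvPolynomial (Fin n) ℂ) ∈ restrictSupport ℂ (T n K 0) := by
  have : (1 : MvPolynomial (Fin n) ℂ) = monomial 0 1 := rfl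
  rw [this, monomial_mem_restrictSupport]
  left
  simp only [T, Set.mem_ofPred_eq, Nat.cast_zero, Set.zero_smul_set hK]
  ext i; simp [toR]

lemma pow_mem (n : ℕ) {K : Set (Fin n → ℝ)} (hK : Convex ℝ K) (hne : K.Nonempty)
    {f : MvPolynomial (Fin n) ℂ} (hf : f ∈ restrictSupport ℂ (T n K 1)) (j : ℕ) :
    f ^ j ∈ restrictSupport ℂ (T n K j) := by
  induction j with
  | zero => simpa using one_mem n hne
  | succ j ih => rw [pow_succ]; exact mul_mem n hK ih hf

lemma prod_mem (n : ℕ) {K : Set (Fin n → ℝ)} (hK : Convex ℝ K) (hne : K.Nonempty)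
    {ι : Type*} (P : ι → MvPolynomial (Fin n) ℂ)
    (hf : ∀ i, P i ∈ restrictSupport ℂ (T n K 1)) (e : ι → ℕ) (A : Finset ι) :
    ∏ i ∈ A, P i ^ e i ∈ restrictSupport ℂ (T n K (∑ i ∈ A, e i)) := by
  classical
  induction A using Finset.induction_on with
  | empty => simpa using one_mem n hne
  | insert a A ha ih =>
    rw [Finset.prod_insert ha, Finset.sum_insert ha]
    exact mul_mem n hK (pow_mem n hK hne (hf a) _) ih

lemma finrank_restrict {σ : Type*} (S : Set (σ →₀ ℕ)) :
    Module.finrank ℂ (restrictSupport ℂ S) = Nat.card S :=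
  Module.finrank_eq_nat_card_basis (basisRestrictSupport ℂ S)

lemma degSet_eq (n m : ℕ) :
    {s : Fin (n+1) →₀ ℕ | (s.sum fun _ e => e) ≤ m} =
      ↑((Finset.range (m + 1)).biUnion
        fun j => (Finset.univ : Finset (Fin (n+1))).finsuppAntidiag j) := by
  ext s
  simp [Finset.mem_finsuppAntidiag, Finsupp.sum_fintype]

lemma finite_deg (n m : ℕ) : Module.Finite ℂ (restrictTotalDegree (Fin (n+1)) ℂ m) := by
  have : Finite {s : Fin (n+1) →₀ ℕ | (s.sum fun _ e => e) ≤ m} := by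
    rw [degSet_eq]; exact Finset.finite_toSet _
  exact Module.Finite.of_basis (basisRestrictSupport ℂ _)

lemma finrank_deg (n m : ℕ) :
    Module.finrank ℂ (restrictTotalDegree (Fin (n+1)) ℂ m) =
      ∑ j ∈ Finset.range (m + 1), (n + j).choose n := by
  rw [restrictTotalDegree, finrank_restrict, degSet_eq, Nat.card_coe_set_eq, Set.ncard_coe_finset,
    Finset.card_biUnion]
  · refine Finset.sum_congr rfl fun j _ => ?_
    rw [Finset.card_finsuppAntidiag_nat_eq_choose]
    simp only [Finset.card_univ, Fintype.card_fin]
    rw [show n + 1 + j - 1 = n + j by omega, Nat.choose_symm_add]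
  · intro i _ j _ hij
    rw [Function.onFun, Finset.disjoint_left]
    intro s hs hs'
    rw [Finset.mem_finsuppAntidiag] at hs hs'
    exact hij (hs.1.symm.trans hs'.1)

lemma finrank_growth (n k d : ℕ) :
    Module.finrank ℂ (restrictTotalDegree (Fin (n+1)) ℂ k) + d * (n + k).choose n ≤
      Module.finrank ℂ (restrictTotalDegree (Fin (n+1)) ℂ (k + d)) := by
  induction d with
  | zero => simp
  | succ d ih =>
    rw [finrank_deg] at *
    rw [finrank_deg] at *
    rw [← add_assoc, Finset.sum_range_succ _ (k + d + 1)]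
    have : (n + k).choose n ≤ (n + (k + d + 1)).choose n := Nat.choose_le_choose _ (by omega)
    linarith [add_mul d 1 ((n + k).choose n)]

lemma pow_le_fact_choose (n k : ℕ) : k ^ n ≤ n.factorial * (n + k).choose n := by
  rw [← Nat.descFactorial_eq_factorial_mul_choose]
  refine le_trans ?_ (Nat.pow_sub_le_descFactorial (n + k) n)
  exact Nat.pow_le_pow_left (by omega) _

lemma lattice_finite (n : ℕ) {K : Set (Fin n → ℝ)} (hK : Bornology.IsBounded K) {m : ℕ}
    (hm : m ≠ 0) :
    (K ∩ (m : ℝ)⁻¹ • (Submodule.span ℤ (Set.range (Pi.basisFun ℝ (Fin n))) :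
      Set (Fin n → ℝ))).Finite := by
  have h : ((m : ℝ) • K ∩ (Submodule.span ℤ (Set.range (Pi.basisFun ℝ (Fin n))) :
      Set (Fin n → ℝ))).Finite := ZSpan.setFinite_inter _ (hK.smul₀ _)
  have hm' : (m : ℝ) ≠ 0 := by exact_mod_cast hm
  refine (h.image (fun x => (m : ℝ)⁻¹ • x)).subset ?_
  rintro x ⟨hx, y, hy, rfl⟩
  refine ⟨y, ⟨⟨_, hx, ?_⟩, hy⟩, rfl⟩
  simp [smul_smul, hm']

lemma T_card_le (n : ℕ) {K : Set (Fin n → ℝ)} (hK : Bornology.IsBounded K) {m : ℕ}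
    (hm : m ≠ 0) :
    Finite (T n K m) ∧ Nat.card (T n K m) ≤
      Nat.card ↑(K ∩ (m : ℝ)⁻¹ • (Submodule.span ℤ (Set.range (Pi.basisFun ℝ (Fin n))) :
      Set (Fin n → ℝ))) := by
  have hm' : (m : ℝ) ≠ 0 := by exact_mod_cast hm
  have := (lattice_finite n hK hm).to_subtype
  have key : ∀ s : T n K m, (m : ℝ)⁻¹ • toR n s ∈
      (K ∩ (m : ℝ)⁻¹ • (Submodule.span ℤ (Set.range (Pi.basisFun ℝ (Fin n))) :
      Set (Fin n → ℝ))) := by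
    rintro ⟨s, hs⟩
    refine ⟨?_, ?_⟩
    · obtain ⟨x, hx, h⟩ := hs
      simp only [← h, smul_smul, inv_mul_cancel₀ hm', one_smul]
      exact hx
    · refine Set.smul_mem_smul_set ?_
      rw [SetLike.mem_coe, Module.Basis.mem_span_iff_repr_mem]
      intro i
      exact ⟨(s i : ℤ), by simp [toR]⟩
  let F : T n K m → ↑(K ∩ (m : ℝ)⁻¹ • (Submodule.span ℤ (Set.range (Pi.basisFun ℝ (Fin n))) :
      Set (Fin n → ℝ))) := fun s => ⟨_, key s⟩
  have hF : Function.Injective F := by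
    intro a b h
    have h1 := congrArg Subtype.val h
    simp only [F] at h1
    exact Subtype.ext (toR_inj n (smul_right_injective _ (inv_ne_zero hm') h1))
  exact ⟨Finite.of_injective F hF, Nat.card_le_card_of_injective F hF⟩

lemma dim_bound (n : ℕ)
    (P : Fin (n + 1) → MvPolynomial (Fin n) ℂ) (Q : MvPolynomial (Fin n) ℂ) (hQ : Q ≠ 0)
    (φ : MvPolynomial (Fin (n + 1)) ℂ) (hφ : φ ≠ 0)
    (hker : RingHom.ker (MvPolynomial.aeval (R := ℂ)
        (fun i : Fin (n + 1) =>
          algebraMap (MvPolynomial (Fin n) ℂ) (FractionRing (MvPolynomial (Fin n) ℂ)) (P i) /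
          algebraMap (MvPolynomial (Fin n) ℂ) (FractionRing (MvPolynomial (Fin n) ℂ)) Q) :
        MvPolynomial (Fin (n + 1)) ℂ →+* FractionRing (MvPolynomial (Fin n) ℂ)) =
      Ideal.span {φ})
    {K : Set (Fin n → ℝ)} (hK : Convex ℝ K) (hne : K.Nonempty)
    (hP : ∀ i, P i ∈ restrictSupport ℂ (T n K 1)) (hQK : Q ∈ restrictSupport ℂ (T n K 1))
    (k : ℕ) (hfin : Finite (T n K (k + φ.totalDegree))) :
    Module.finrank ℂ (restrictTotalDegree (Fin (n+1)) ℂ (k + φ.totalDegree)) ≤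
    Module.finrank ℂ (restrictTotalDegree (Fin (n+1)) ℂ k) +
      Nat.card (T n K (k + φ.totalDegree)) := by
  set d := φ.totalDegree with hd
  set α := MvPolynomial.aeval (R := ℂ)
        (fun i : Fin (n + 1) =>
          algebraMap (MvPolynomial (Fin n) ℂ) (FractionRing (MvPolynomial (Fin n) ℂ)) (P i) /
          algebraMap (MvPolynomial (Fin n) ℂ) (FractionRing (MvPolynomial (Fin n) ℂ)) Q) with hα
  set q := algebraMap (MvPolynomial (Fin n) ℂ) (FractionRing (MvPolynomial (Fin n) ℂ)) Q with hq
  have hq0 : q ≠ 0 := by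
    rw [hq, Ne, FaithfulSMul.algebraMap_eq_zero_iff]; exact hQ
  set W := restrictTotalDegree (Fin (n+1)) ℂ (k + d) with hW
  have := finite_deg n (k + d)
  have := finite_deg n k
  have : Module.Finite ℂ (restrictSupport ℂ (T n K (k + d))) :=
    Module.Finite.of_basis (basisRestrictSupport ℂ _)
  let β : MvPolynomial (Fin (n+1)) ℂ →ₗ[ℂ] FractionRing (MvPolynomial (Fin n) ℂ) :=
    (LinearMap.mulLeft ℂ (q ^ (k + d))).comp α.toLinearMap
  have hβ : ∀ f, β f = q ^ (k + d) * α f := fun f => rfl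
  let ι : MvPolynomial (Fin n) ℂ →ₗ[ℂ] FractionRing (MvPolynomial (Fin n) ℂ) :=
    (IsScalarTower.toAlgHom ℂ (MvPolynomial (Fin n) ℂ) _).toLinearMap
  have hι : ∀ f, ι f = algebraMap _ _ f := fun f => rfl
  have hrn := LinearMap.finrank_range_add_finrank_ker (β.comp W.subtype)
  have hrange : Module.finrank ℂ (LinearMap.range (β.comp W.subtype)) ≤ Nat.card (T n K (k + d)) := by
    rw [← finrank_restrict]
    refine le_trans (Submodule.finrank_mono ?_) (Submodule.finrank_map_le ι _)
    rintro _ ⟨⟨f, hf⟩, rfl⟩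
    simp only [LinearMap.comp_apply, Submodule.subtype_apply]
    rw [f.as_sum, map_sum]
    refine Submodule.sum_mem _ fun s hs => ?_
    have hs' : ∑ i, s i ≤ k + d := by
      have := hf hs
      simpa [Finsupp.sum_fintype] using this
    refine ⟨coeff s f • (Q ^ (k + d - ∑ i, s i) * ∏ i, P i ^ s i), ?_, ?_⟩
    · refine Submodule.smul_mem _ _ ?_
      have h := mul_mem n hK (pow_mem n hK hne hQK (k + d - ∑ i, s i))
        (prod_mem n hK hne P hP s Finset.univ)
      rwa [Nat.sub_add_cancel hs'] at h
    · rw [map_smul, hι, hβ, hα, aeval_monomial, Algebra.smul_def, Finsupp.prod_fintype _ _ (by simp)]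
      simp only [map_mul, map_pow, map_prod, div_pow, Finset.prod_div_distrib, ← hq,
        Finset.prod_pow_eq_pow_sum]
      nth_rewrite 2 [← Nat.sub_add_cancel hs']
      rw [pow_add]
      field_simp
  have hkerr : Module.finrank ℂ (LinearMap.ker (β.comp W.subtype)) ≤
      Module.finrank ℂ (restrictTotalDegree (Fin (n+1)) ℂ k) := by
    rw [← Submodule.finrank_map_subtype_eq]
    refine le_trans (Submodule.finrank_mono ?_)
      (Submodule.finrank_map_le (LinearMap.mulLeft ℂ φ) _)
    rintro _ ⟨⟨f, hf⟩, hf0, rfl⟩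
    have h0 : β f = 0 := hf0
    have h1 : α f = 0 := by
      rw [hβ] at h0
      exact (mul_eq_zero.1 h0).resolve_left (pow_ne_zero _ hq0)
    have h2 : f ∈ Ideal.span {φ} := by
      rw [← hker]; exact h1
    obtain ⟨g, rfl⟩ := Ideal.mem_span_singleton'.1 h2
    refine ⟨g, ?_, mul_comm _ _⟩
    rw [SetLike.mem_coe, mem_restrictTotalDegree]
    by_cases hg : g = 0
    · simp [hg]
    have h3 : (g * φ).totalDegree ≤ k + d := (mem_restrictTotalDegree _ _ _).1 hf
    rw [totalDegree_mul_of_isDomain hg hφ] at h3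
    omega
  omega

end ImplicitDeg

/-- Degree bound for the implicit equation of a rational parameterization
`x_i = P_i / Q` with a common denominator: the total degree of `φ` is at most `n!`
times the volume of the convex hull of the union of the supports of the `x_i Q - P_i`. -/
theorem totalDegree_implicit_le_common_denominator (n : ℕ) (hn : 1 ≤ n)
    (P : Fin (n + 1) → MvPolynomial (Fin n) ℂ) (Q : MvPolynomial (Fin n) ℂ) (hQ : Q ≠ 0)
    (φ : MvPolynomial (Fin (n + 1)) ℂ) (hφ : φ ≠ 0)
    (hker : RingHom.ker (MvPolynomial.aeval (R := ℂ)
        (fun i : Fin (n + 1) =>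
          algebraMap (MvPolynomial (Fin n) ℂ) (FractionRing (MvPolynomial (Fin n) ℂ)) (P i) /
          algebraMap (MvPolynomial (Fin n) ℂ) (FractionRing (MvPolynomial (Fin n) ℂ)) Q) :
        MvPolynomial (Fin (n + 1)) ℂ →+* FractionRing (MvPolynomial (Fin n) ℂ)) =
      Ideal.span {φ}) :
    (φ.totalDegree : ENNReal) ≤ (n.factorial : ENNReal) *
      MeasureTheory.volume (convexHull ℝ (suppSet n Q ∪ ⋃ i, suppSet n (P i))) := by
  classical
  set S := suppSet n Q ∪ ⋃ i, suppSet n (P i) with hS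
  set K := convexHull ℝ S with hKdef
  have hSfin : S.Finite :=
    (Q.support.finite_toSet.image _).union
      (Set.finite_iUnion fun i => (P i).support.finite_toSet.image _)
  have hcomp : IsCompact K := hSfin.isCompact_convexHull ℝ
  have hK : Convex ℝ K := convex_convexHull ℝ S
  have hb := hcomp.isBounded
  have hSK : S ⊆ K := subset_convexHull ℝ S
  have hmem : ∀ p : MvPolynomial (Fin n) ℂ, suppSet n p ⊆ S →
      p ∈ MvPolynomial.restrictSupport ℂ (ImplicitDeg.T n K 1) := by
    intro p hp
    rw [MvPolynomial.mem_restrictSupport_iff]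
    intro s hs
    have : ImplicitDeg.toR n s ∈ K := hSK (hp ⟨s, hs, rfl⟩)
    exact ⟨_, this, by simp⟩
  have hQK := hmem Q Set.subset_union_left
  have hPK : ∀ i, P i ∈ MvPolynomial.restrictSupport ℂ (ImplicitDeg.T n K 1) := fun i =>
    hmem _ ((Set.subset_iUnion (fun i => suppSet n (P i)) i).trans Set.subset_union_right)
  have hne : K.Nonempty := by
    obtain ⟨s, hs⟩ := MvPolynomial.support_nonempty.2 hQ
    exact ⟨_, hSK (Or.inl ⟨s, hs, rfl⟩)⟩
  have hlim := tendsto_card_div_pow_atTop_volume K hb hcomp.measurableSet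
    (hK.addHaar_frontier MeasureTheory.volume)
  set d := φ.totalDegree with hd
  have hlim2 := hlim.comp (Filter.tendsto_add_atTop_nat d)
  have hlim3 := hlim2.const_mul (n.factorial : ℝ)
  have hratio : Filter.Tendsto (fun k : ℕ => (d : ℝ) * ((k : ℝ) / ((k : ℝ) + d)) ^ n)
      Filter.atTop (nhds ((d : ℝ) * 1 ^ n)) :=
    ((tendsto_natCast_div_add_atTop (d : ℝ)).pow n).const_mul _
  have hle : (d : ℝ) * 1 ^ n ≤ (n.factorial : ℝ) * MeasureTheory.volume.real K := by
    refine le_of_tendsto_of_tendsto hratio hlim3 ?_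
    filter_upwards [Filter.eventually_gt_atTop 0] with k hk
    have hm : k + d ≠ 0 := by omega
    obtain ⟨hfin, hcard⟩ := ImplicitDeg.T_card_le n hb hm
    have h1 := ImplicitDeg.dim_bound n P Q hQ φ hφ hker hK hne hPK hQK k hfin
    rw [← hd] at h1
    have h2 := ImplicitDeg.finrank_growth n k d
    have h3 : d * (n + k).choose n ≤ _ := le_trans (by omega) hcard
    have h4 := ImplicitDeg.pow_le_fact_choose n k
    have h5 := (Nat.mul_le_mul_left d h4).trans
      ((Nat.mul_left_comm _ _ _).le.trans (Nat.mul_le_mul_left n.factorial h3))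
    have h6 := (Nat.cast_le (α := ℝ)).2 h5
    rw [Nat.cast_mul, Nat.cast_pow, Nat.cast_mul, Nat.cast_add] at h6
    simp only [Function.comp_apply, Fintype.card_fin]
    rw [div_pow, ← mul_div_assoc, ← mul_div_assoc, Nat.cast_add]
    have hpos : (0 : ℝ) < k := by exact_mod_cast hk
    exact div_le_div_of_nonneg_right h6 (by positivity)
  rw [one_pow, mul_one] at hle
  have hfinite : MeasureTheory.volume K ≠ ⊤ := hcomp.measure_lt_top.ne
  rw [← ENNReal.ofReal_toReal hfinite, ← ENNReal.ofReal_natCast, ← ENNReal.ofReal_natCast,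
    ← ENNReal.ofReal_mul (by positivity)]
  exact ENNReal.ofReal_le_ofReal hle
end

section
/- Let n ≥ 1 and let P₀,…,P_n, Q₀,…,Q_n ∈ ℂ[t₁,…,t_n] with every Q_i ≠ 0. Define S ⊂ ℕⁿ as the union over i = 0,…,n of the Minkowski sums supp(P_i) + Σ_{j≠i} supp(Q_j), together with the Minkowski sum Σ_{i=0}^n supp(Q_i) (all sums of sets taken elementwise). Assume that the kernel of the ℂ-algebra homomorphism ℂ[x₀,…,x_n] → ℂ(t₁,…,t_n) sending x_i to P_i/Q_i is a nonzero principal ideal generated by φ. Then the total degree of φ is at most n! times the n-dimensional Lebesgue volume of the convex hull of S in ℝⁿ. -/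
open Pointwise

open MvPolynomial in
theorem aux_finrank_totalDegree (n k : ℕ) :
    Module.finrank ℂ (restrictTotalDegree (Fin (n + 1)) ℂ k) =
      ∑ j ∈ Finset.range (k + 1), (n + j).choose j := by
  classical
  have hb := Module.finrank_eq_nat_card_basis
    (basisRestrictSupport ℂ {m : Fin (n + 1) →₀ ℕ | (m.sum fun _ e => e) ≤ k})
  rw [restrictTotalDegree, hb]
  have hset : {m : Fin (n + 1) →₀ ℕ | (m.sum fun _ e => e) ≤ k} =
      ↑((Finset.range (k + 1)).biUnion fun j =>
        (Finset.univ : Finset (Fin (n + 1))).finsuppAntidiag j) := by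
    ext m
    simp [Finsupp.sum_fintype]
  rw [hset, Nat.card_coe_set_eq, Set.ncard_coe_finset, Finset.card_biUnion]
  · refine Finset.sum_congr rfl fun j _ => ?_
    rw [Finset.card_finsuppAntidiag_nat_eq_choose]
    congr 1
    simp
    try omega
  · intro i _ j _ hij
    rw [Function.onFun, Finset.disjoint_left]
    intro m hm hm'
    simp at hm hm'
    omega

theorem aux_choose (n j : ℕ) : j ^ n ≤ n.factorial * (n + j).choose j := by
  have h1 := Nat.pow_succ_le_ascFactorial (j + 1) n
  rw [Nat.ascFactorial_eq_factorial_mul_choose] at h1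
  have : (n + j).choose j = (j + n).choose n := by
    rw [add_comm, Nat.choose_symm_add]
  rw [this]
  exact (Nat.pow_le_pow_left (Nat.le_succ j) n).trans h1

theorem aux_diff (n k d : ℕ) (hd : d ≤ k) :
    d * (k - d) ^ n + n.factorial * ∑ j ∈ Finset.range (k - d + 1), (n + j).choose j ≤
      n.factorial * ∑ j ∈ Finset.range (k + 1), (n + j).choose j := by
  obtain ⟨e, rfl⟩ := Nat.exists_eq_add_of_le hd
  have : d + e + 1 = (e + 1) + d := by ring
  rw [Nat.add_sub_cancel_left, this, Finset.sum_range_add _ (e + 1) d, mul_add, add_comm (d * e ^ n)]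
  refine Nat.add_le_add_left ?_ _
  rw [Finset.mul_sum]
  calc d * e ^ n = ∑ x ∈ Finset.range d, e ^ n := by simp
    _ ≤ _ := Finset.sum_le_sum fun x _ =>
      (Nat.pow_le_pow_left (by omega) n).trans (aux_choose n (e + 1 + x))

theorem suppSet_one (n : ℕ) : suppSet n 1 = {0} := by
  classical
  simp [suppSet, MvPolynomial.support_one]
  rfl

theorem suppSet_mul (n : ℕ) (p q : MvPolynomial (Fin n) ℂ) :
    suppSet n (p * q) ⊆ suppSet n p + suppSet n q := by
  classical
  rintro _ ⟨d, hd, rfl⟩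
  obtain ⟨a, ha, b, hb, rfl⟩ := Finset.mem_add.1 (MvPolynomial.support_mul p q hd)
  exact ⟨_, ⟨a, ha, rfl⟩, _, ⟨b, hb, rfl⟩, by ext; simp⟩

theorem suppSet_prod (n : ℕ) {ι : Type*} (s : Finset ι) (q : ι → MvPolynomial (Fin n) ℂ) :
    suppSet n (∏ i ∈ s, q i) ⊆ ∑ i ∈ s, suppSet n (q i) := by
  classical
  induction s using Finset.induction_on with
  | empty => simp [suppSet_one]
  | insert a s ha ih =>
    rw [Finset.prod_insert ha, Finset.sum_insert ha]
    exact (suppSet_mul n _ _).trans (Set.add_subset_add_left ih)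

theorem suppSet_nonempty (n : ℕ) {p : MvPolynomial (Fin n) ℂ} (hp : p ≠ 0) :
    (suppSet n p).Nonempty :=
  Set.Nonempty.image _ (Finset.coe_nonempty.2 (MvPolynomial.support_nonempty.2 hp))

theorem suppSet_finite (n : ℕ) (p : MvPolynomial (Fin n) ℂ) : (suppSet n p).Finite :=
  (Finset.finite_toSet _).image _

theorem finite_sum_sets {M ι : Type*} [AddCommMonoid M] (s : Finset ι) (f : ι → Set M)
    (hf : ∀ i ∈ s, (f i).Finite) : (∑ i ∈ s, f i).Finite := by
  classical
  induction s using Finset.induction_on with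
  | empty => simp
  | insert a s ha ih =>
    rw [Finset.sum_insert ha]
    exact (hf a (by simp)).add (ih fun i hi => hf i (by simp [hi]))

section conv

variable {n : ℕ} {K : Set (Fin n → ℝ)}

theorem suppSet_mul_smul (hK : Convex ℝ K) {p q : MvPolynomial (Fin n) ℂ} {a b : ℕ}
    (hp : suppSet n p ⊆ (a : ℝ) • K) (hq : suppSet n q ⊆ (b : ℝ) • K) :
    suppSet n (p * q) ⊆ ((a + b : ℕ) : ℝ) • K := by
  rw [Nat.cast_add, hK.add_smul (Nat.cast_nonneg a) (Nat.cast_nonneg b)]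
  exact (suppSet_mul n p q).trans (Set.add_subset_add hp hq)

theorem suppSet_one_smul (hne : K.Nonempty) : suppSet n 1 ⊆ ((0 : ℕ) : ℝ) • K := by
  rw [suppSet_one, Nat.cast_zero, Set.zero_smul_set hne]
  rfl

theorem suppSet_pow_smul (hK : Convex ℝ K) (hne : K.Nonempty) {p : MvPolynomial (Fin n) ℂ}
    (hp : suppSet n p ⊆ K) (a : ℕ) : suppSet n (p ^ a) ⊆ (a : ℝ) • K := by
  induction a with
  | zero => simpa using suppSet_one_smul hne
  | succ a ih =>
    rw [pow_succ]
    exact suppSet_mul_smul hK ih (by simpa using hp)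

theorem suppSet_prod_pow_smul (hK : Convex ℝ K) (hne : K.Nonempty) {ι : Type*} (s : Finset ι)
    (F : ι → MvPolynomial (Fin n) ℂ) (hF : ∀ i, suppSet n (F i) ⊆ K) (m : ι → ℕ) :
    suppSet n (∏ i ∈ s, F i ^ m i) ⊆ ((∑ i ∈ s, m i : ℕ) : ℝ) • K := by
  classical
  induction s using Finset.induction_on with
  | empty => simpa using suppSet_one_smul hne
  | insert a s ha ih =>
    rw [Finset.prod_insert ha, Finset.sum_insert ha]
    exact suppSet_mul_smul hK (suppSet_pow_smul hK hne (hF a) _) ih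

/-- Exponent vectors lying in `k • K`. -/
def latticeSet (K : Set (Fin n → ℝ)) (k : ℕ) : Set (Fin n →₀ ℕ) :=
  {d | (fun i => (d i : ℝ)) ∈ (k : ℝ) • K}

theorem latticeSet_card (hK : Bornology.IsBounded K) (k : ℕ) (hk : k ≠ 0) :
    (latticeSet K k).Finite ∧ Nat.card (latticeSet K k) ≤
      Nat.card ↑(K ∩ (k : ℝ)⁻¹ • (Submodule.span ℤ (Set.range (Pi.basisFun ℝ (Fin n))) :
        Set (Fin n → ℝ))) := by
  have hk' : (k : ℝ) ≠ 0 := Nat.cast_ne_zero.2 hk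
  set L : Set (Fin n → ℝ) := (Submodule.span ℤ (Set.range (Pi.basisFun ℝ (Fin n))) :
    Set (Fin n → ℝ)) with hL
  have hfin : (K ∩ (k : ℝ)⁻¹ • L).Finite := by
    have h1 := ZSpan.setFinite_inter (Pi.basisFun ℝ (Fin n)) (hK.smul₀ (k : ℝ))
    have h2 := h1.smul_set (a := (k : ℝ)⁻¹)
    refine h2.subset ?_
    rw [Set.smul_set_inter₀ (inv_ne_zero hk'), smul_smul, inv_mul_cancel₀ hk', one_smul]
  have := hfin.to_subtype
  let f : latticeSet K k → ↑(K ∩ (k : ℝ)⁻¹ • L) := fun d =>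
    ⟨(k : ℝ)⁻¹ • (fun i => (d.1 i : ℝ)), by
      refine ⟨?_, Set.smul_mem_smul_set ?_⟩
      · have hd : (fun i => (d.1 i : ℝ)) ∈ (k : ℝ) • K := d.2
        rwa [Set.mem_smul_set_iff_inv_smul_mem₀ hk'] at hd
      · rw [hL, SetLike.mem_coe, Module.Basis.mem_span_iff_repr_mem]
        intro i
        exact ⟨(d.1 i : ℤ), by simp⟩⟩
  have hf : Function.Injective f := by
    intro d e h
    have h1 := congrArg Subtype.val h
    have h2 := smul_right_injective _ (inv_ne_zero hk') h1
    ext i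
    exact_mod_cast congrFun h2 i
  exact ⟨Set.finite_coe_iff.1 (Finite.of_injective f hf), Nat.card_le_card_of_injective f hf⟩

end conv

section homog

open MvPolynomial

variable {n : ℕ}

/-- Homogenization at level `k`: substitute `F i` for `x i` and homogenize using `G`. -/
noncomputable def homogMap (F : Fin (n + 1) → MvPolynomial (Fin n) ℂ)
    (G : MvPolynomial (Fin n) ℂ) (k : ℕ) :
    MvPolynomial (Fin (n + 1)) ℂ →ₗ[ℂ] MvPolynomial (Fin n) ℂ :=
  (basisMonomials (Fin (n + 1)) ℂ).constr ℂ
    (fun m => (∏ i, F i ^ m i) * G ^ (k - ∑ i, m i))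

theorem homogMap_monomial (F : Fin (n + 1) → MvPolynomial (Fin n) ℂ)
    (G : MvPolynomial (Fin n) ℂ) (k : ℕ) (m : Fin (n + 1) →₀ ℕ) :
    homogMap F G k (monomial m 1) = (∏ i, F i ^ m i) * G ^ (k - ∑ i, m i) := by
  have := (basisMonomials (Fin (n + 1)) ℂ).constr_basis ℂ
    (fun m => (∏ i, F i ^ m i) * G ^ (k - ∑ i, m i)) m
  simpa [homogMap] using this

theorem algebraMap_frac_smul (c : ℂ) (a : MvPolynomial (Fin n) ℂ) :
    algebraMap _ (FractionRing (MvPolynomial (Fin n) ℂ)) (c • a) =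
      c • algebraMap _ (FractionRing (MvPolynomial (Fin n) ℂ)) a :=
  algebraMap.coe_smul c a _

theorem homogMap_spec (F : Fin (n + 1) → MvPolynomial (Fin n) ℂ)
    (G : MvPolynomial (Fin n) ℂ) (k : ℕ)
    (x : Fin (n + 1) → FractionRing (MvPolynomial (Fin n) ℂ))
    (hx : ∀ i, algebraMap _ (FractionRing (MvPolynomial (Fin n) ℂ)) (F i) =
      algebraMap _ (FractionRing (MvPolynomial (Fin n) ℂ)) G * x i)
    {K : Set (Fin n → ℝ)} (hK : Convex ℝ K) (hne : K.Nonempty)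
    (hF : ∀ i, suppSet n (F i) ⊆ K) (hG : suppSet n G ⊆ K)
    (f : MvPolynomial (Fin (n + 1)) ℂ) (hf : f ∈ restrictTotalDegree (Fin (n + 1)) ℂ k) :
    algebraMap _ (FractionRing (MvPolynomial (Fin n) ℂ)) (homogMap F G k f) =
      algebraMap _ (FractionRing (MvPolynomial (Fin n) ℂ)) G ^ k * aeval x f ∧
    homogMap F G k f ∈ restrictSupport ℂ (latticeSet K k) := by
  rw [restrictTotalDegree, restrictSupport_eq_span] at hf
  induction hf using Submodule.span_induction with
  | mem f hf =>
    obtain ⟨m, hm, rfl⟩ := hf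
    have hm' : ∑ i, m i ≤ k := by simpa [Finsupp.sum_fintype] using hm
    simp only [homogMap_monomial]
    constructor
    · rw [aeval_monomial, map_mul, map_prod, map_one, one_mul, Finsupp.prod_fintype _ _ (by simp)]
      simp only [map_pow, hx, mul_pow, Finset.prod_mul_distrib, Finset.prod_pow_eq_pow_sum]
      conv_rhs => rw [← Nat.sub_add_cancel hm', pow_add]
      ring
    · rw [mem_restrictSupport_iff]
      intro d hd
      have h := suppSet_mul_smul hK (suppSet_prod_pow_smul hK hne Finset.univ F hF m)
        (suppSet_pow_smul hK hne hG (k - ∑ i, m i))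
      rw [Nat.add_sub_cancel' hm'] at h
      exact h ⟨d, hd, rfl⟩
  | zero => simp
  | add a b _ _ ha hb =>
    refine ⟨?_, ?_⟩
    · rw [map_add, map_add, map_add, ha.1, hb.1, mul_add]
    · rw [map_add]; exact Submodule.add_mem _ ha.2 hb.2
  | smul c a _ ha =>
    refine ⟨?_, ?_⟩
    · rw [map_smul, algebraMap_frac_smul, ha.1, map_smul, mul_smul_comm]
    · rw [map_smul]; exact Submodule.smul_mem _ _ ha.2

theorem dim_ineq (F : Fin (n + 1) → MvPolynomial (Fin n) ℂ)
    (G : MvPolynomial (Fin n) ℂ) (hG0 : G ≠ 0) (k : ℕ)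
    (x : Fin (n + 1) → FractionRing (MvPolynomial (Fin n) ℂ))
    (hx : ∀ i, algebraMap _ (FractionRing (MvPolynomial (Fin n) ℂ)) (F i) =
      algebraMap _ (FractionRing (MvPolynomial (Fin n) ℂ)) G * x i)
    {K : Set (Fin n → ℝ)} (hK : Convex ℝ K) (hne : K.Nonempty)
    (hF : ∀ i, suppSet n (F i) ⊆ K) (hG : suppSet n G ⊆ K)
    (hfin : (latticeSet K k).Finite)
    (φ : MvPolynomial (Fin (n + 1)) ℂ) (hφ : φ ≠ 0)
    (hker : ∀ f, aeval x f = 0 → φ ∣ f) :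
    Module.finrank ℂ (restrictTotalDegree (Fin (n + 1)) ℂ k) ≤
      Nat.card (latticeSet K k) +
      Module.finrank ℂ (restrictTotalDegree (Fin (n + 1)) ℂ (k - φ.totalDegree)) := by
  have hspec := homogMap_spec F G k x hx hK hne hF hG
  set V := restrictTotalDegree (Fin (n + 1)) ℂ k
  have hfi : Finite (latticeSet K k) := hfin.to_subtype
  have : Module.Finite ℂ (restrictSupport ℂ (latticeSet K k)) :=
    Module.Finite.of_basis (basisRestrictSupport ℂ _)
  rw [← LinearMap.finrank_range_add_finrank_ker ((homogMap F G k).domRestrict V)]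
  refine add_le_add ?_ ?_
  · rw [← Module.finrank_eq_nat_card_basis (basisRestrictSupport ℂ (latticeSet K k))]
    apply Submodule.finrank_mono
    rintro _ ⟨f, rfl⟩
    exact (hspec f.1 f.2).2
  · rw [← Submodule.finrank_map_subtype_eq V]
    refine le_trans (Submodule.finrank_mono (t := (restrictTotalDegree (Fin (n + 1)) ℂ
      (k - φ.totalDegree)).map (LinearMap.mulLeft ℂ φ)) ?_) (Submodule.finrank_map_le _ _)
    rintro _ ⟨f, hf, rfl⟩
    have h0 : homogMap F G k f.1 = 0 := hf
    have h1 := (hspec f.1 f.2).1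
    rw [h0, map_zero, eq_comm, mul_eq_zero] at h1
    have h2 : aeval x f.1 = 0 := h1.resolve_left (pow_ne_zero _ (by simpa using hG0))
    obtain ⟨g, hg⟩ := hker _ h2
    refine ⟨g, ?_, by simp [hg]⟩
    rw [SetLike.mem_coe, mem_restrictTotalDegree]
    have h3 := (mem_restrictTotalDegree _ _ _).1 f.2
    by_cases hg0 : g = 0
    · simp [hg0]
    rw [hg, totalDegree_mul_of_isDomain hφ hg0] at h3
    omega

end homog

open Filter Topology in
theorem limit_arg (n d : ℕ) (N : ℕ → ℕ) (v : ℝ)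
    (hN : Tendsto (fun k : ℕ => (N k : ℝ) / (k : ℝ) ^ n) atTop (𝓝 v))
    (h : ∀ k, d ≤ k → k ≠ 0 → d * (k - d) ^ n ≤ n.factorial * N k) :
    (d : ℝ) ≤ n.factorial * v := by
  have h1 : Tendsto (fun k : ℕ => (d : ℝ) * (1 - (d : ℝ) / (k : ℝ)) ^ n) atTop
      (𝓝 ((d : ℝ) * (1 - 0) ^ n)) :=
    ((tendsto_const_nhds.sub (tendsto_const_div_atTop_nhds_zero_nat (d : ℝ))).pow n).const_mul _
  have h2 := hN.const_mul (n.factorial : ℝ)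
  rw [sub_zero, one_pow, mul_one] at h1
  refine le_of_tendsto_of_tendsto h1 h2 ?_
  filter_upwards [eventually_ge_atTop d, eventually_ne_atTop 0] with k hk hk0
  have hk' : (0 : ℝ) < k := by positivity
  have h3 : ((d * (k - d) ^ n : ℕ) : ℝ) ≤ ((n.factorial * N k : ℕ) : ℝ) :=
    Nat.cast_le.2 (h k hk hk0)
  push_cast [Nat.cast_sub hk] at h3
  rw [one_sub_div hk'.ne', div_pow, ← mul_div_assoc, ← mul_div_assoc]
  gcongr

/-- Degree bound for the implicit equation of a rational parameterization
`x_i = P_i / Q_i` with different denominators: the total degree of `φ` is at most `n!`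
times the volume of the convex hull of
`S = ⋃ᵢ (supp Pᵢ + Σ_{j ≠ i} supp Q_j) ∪ (Σᵢ supp Qᵢ)` (Minkowski sums). -/
theorem totalDegree_implicit_le_different_denominators (n : ℕ) (hn : 1 ≤ n)
    (P Q : Fin (n + 1) → MvPolynomial (Fin n) ℂ) (hQ : ∀ i, Q i ≠ 0)
    (φ : MvPolynomial (Fin (n + 1)) ℂ) (hφ : φ ≠ 0)
    (hker : RingHom.ker (MvPolynomial.aeval (R := ℂ)
        (fun i : Fin (n + 1) =>
          algebraMap (MvPolynomial (Fin n) ℂ) (FractionRing (MvPolynomial (Fin n) ℂ)) (P i) /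
          algebraMap (MvPolynomial (Fin n) ℂ) (FractionRing (MvPolynomial (Fin n) ℂ)) (Q i)) :
        MvPolynomial (Fin (n + 1)) ℂ →+* FractionRing (MvPolynomial (Fin n) ℂ)) =
      Ideal.span {φ}) :
    (φ.totalDegree : ENNReal) ≤ (n.factorial : ENNReal) *
      MeasureTheory.volume (convexHull ℝ
        ((⋃ i, suppSet n (P i) + ∑ j ∈ Finset.univ.erase i, suppSet n (Q j)) ∪
          ∑ i : Fin (n + 1), suppSet n (Q i))) := by
  classical
  set S := ((⋃ i, suppSet n (P i) + ∑ j ∈ Finset.univ.erase i, suppSet n (Q j)) ∪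
          ∑ i : Fin (n + 1), suppSet n (Q i)) with hS
  set K := convexHull ℝ S with hKdef
  have hK : Convex ℝ K := convex_convexHull ℝ S
  have hSfin : S.Finite := by
    refine Set.Finite.union (Set.finite_iUnion fun i => ?_) ?_
    · exact (suppSet_finite n _).add (finite_sum_sets _ _ fun j _ => suppSet_finite n _)
    · exact finite_sum_sets _ _ fun j _ => suppSet_finite n _
  have hcomp : IsCompact K := hSfin.isCompact_convexHull ℝ
  let G := ∏ i, Q i
  let F := fun i => P i * ∏ j ∈ Finset.univ.erase i, Q j
  have hG0 : G ≠ 0 := Finset.prod_ne_zero_iff.2 fun i _ => hQ i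
  have hGK : suppSet n G ⊆ K :=
    ((suppSet_prod n Finset.univ Q).trans Set.subset_union_right).trans (subset_convexHull ℝ S)
  have hFK : ∀ i, suppSet n (F i) ⊆ K := fun i => by
    refine Set.Subset.trans ?_ (subset_convexHull ℝ S)
    refine Set.Subset.trans ?_ Set.subset_union_left
    refine Set.Subset.trans ?_ (Set.subset_iUnion _ i)
    exact (suppSet_mul n _ _).trans (Set.add_subset_add_left (suppSet_prod n _ Q))
  have hne : K.Nonempty := (suppSet_nonempty n hG0).mono hGK
  have hx : ∀ i, algebraMap _ (FractionRing (MvPolynomial (Fin n) ℂ)) (F i) =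
      algebraMap _ (FractionRing (MvPolynomial (Fin n) ℂ)) G *
        (algebraMap (MvPolynomial (Fin n) ℂ) (FractionRing (MvPolynomial (Fin n) ℂ)) (P i) /
          algebraMap (MvPolynomial (Fin n) ℂ) (FractionRing (MvPolynomial (Fin n) ℂ)) (Q i)) := by
    intro i
    have hq : algebraMap (MvPolynomial (Fin n) ℂ)
        (FractionRing (MvPolynomial (Fin n) ℂ)) (Q i) ≠ 0 := by simpa using hQ i
    have hGi : G = Q i * ∏ j ∈ Finset.univ.erase i, Q j :=
      (Finset.mul_prod_erase _ _ (Finset.mem_univ i)).symm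
    rw [hGi, map_mul, map_mul]
    field_simp
  have hdvd : ∀ f, MvPolynomial.aeval (R := ℂ) (fun i : Fin (n + 1) =>
          algebraMap (MvPolynomial (Fin n) ℂ) (FractionRing (MvPolynomial (Fin n) ℂ)) (P i) /
          algebraMap (MvPolynomial (Fin n) ℂ) (FractionRing (MvPolynomial (Fin n) ℂ)) (Q i)) f = 0 →
      φ ∣ f := by
    intro f hf
    rw [← Ideal.mem_span_singleton, ← hker]
    exact hf
  have hlim := tendsto_card_div_pow_atTop_volume K hcomp.isBounded
    hcomp.isClosed.measurableSet (hK.addHaar_frontier MeasureTheory.volume)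
  rw [Fintype.card_fin] at hlim
  have hreal := limit_arg n φ.totalDegree _ _ hlim (by
    intro k hk hk0
    obtain ⟨hfin, hcard⟩ := latticeSet_card hcomp.isBounded k hk0
    have h1 := dim_ineq F G hG0 k _ hx hK hne hFK hGK hfin φ hφ hdvd
    rw [aux_finrank_totalDegree, aux_finrank_totalDegree] at h1
    have h2 := aux_diff n k φ.totalDegree hk
    have h3 := Nat.mul_le_mul_left n.factorial (h1.trans (Nat.add_le_add_right hcard _))
    rw [mul_add] at h3
    exact Nat.le_of_add_le_add_right (h2.trans h3))
  have hvol : MeasureTheory.volume K ≠ ⊤ := hcomp.measure_lt_top.ne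
  rw [← ENNReal.ofReal_natCast, ← ENNReal.ofReal_natCast (n.factorial),
    ← ENNReal.ofReal_toReal hvol, ← ENNReal.ofReal_mul (Nat.cast_nonneg _)]
  exact ENNReal.ofReal_le_ofReal hreal
end

section
/- Let m_i ≤ l_i and m_j ≤ l_j be natural numbers, and in ℝ² let T_i be the convex hull of {(0,1), (m_i,0), (l_i,0)} and T_j the convex hull of {(0,1), (m_j,0), (l_j,0)}. Then vol(T_i + T_j) − vol(T_i) − vol(T_j) = max(l_i, l_j) − min(m_i, m_j), where T_i + T_j = {p + q : p ∈ T_i, q ∈ T_j} is the Minkowski sum and vol denotes two-dimensional Lebesgue measure. (Equivalently: the mixed volume of the Newton polygons of f_i = x_i r − P_i(t) and f_j = x_j r − P_j(t), for univariate polynomials P_i, P_j with supports having minimum m_i, m_j and maximum l_i, l_j, equals the length of the convex hull of the union of the supports of P_i and P_j.) -/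
open Pointwise

/-- The Newton polygon of `f = x r - P(t)` where `P` is a univariate polynomial whose
support has minimum `m` and maximum `l`: the triangle with vertices `(0,1)`, `(m,0)`, `(l,0)`. -/
noncomputable def newtonTriangle (m l : ℕ) : Set (ℝ × ℝ) :=
  convexHull ℝ {((0 : ℝ), (1 : ℝ)), ((m : ℝ), (0 : ℝ)), ((l : ℝ), (0 : ℝ))}

/-- Area of the region between two continuous graphs over `[0,T]`. -/
lemma area_between (f g : ℝ → ℝ) (T : ℝ) (hT : 0 ≤ T) (hf : Continuous f) (hg : Continuous g)
    (hfg : ∀ y, 0 ≤ y → y ≤ T → f y ≤ g y) :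
    MeasureTheory.volume {p : ℝ × ℝ | (0 ≤ p.2 ∧ p.2 ≤ T) ∧ f p.2 ≤ p.1 ∧ p.1 ≤ g p.2} =
      ENNReal.ofReal (∫ y in (0:ℝ)..T, (g y - f y)) := by
  have hcl : IsClosed {p : ℝ × ℝ | (0 ≤ p.2 ∧ p.2 ≤ T) ∧ f p.2 ≤ p.1 ∧ p.1 ≤ g p.2} := by
    refine IsClosed.inter (IsClosed.inter ?_ ?_) (IsClosed.inter ?_ ?_)
    · exact isClosed_le continuous_const continuous_snd
    · exact isClosed_le continuous_snd continuous_const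
    · exact isClosed_le (hf.comp continuous_snd) continuous_fst
    · exact isClosed_le continuous_fst (hg.comp continuous_snd)
  rw [MeasureTheory.Measure.volume_eq_prod, MeasureTheory.Measure.prod_apply_symm hcl.measurableSet]
  have h1 : ∀ y : ℝ, MeasureTheory.volume ((fun x : ℝ => (x, y)) ⁻¹'
      {p : ℝ × ℝ | (0 ≤ p.2 ∧ p.2 ≤ T) ∧ f p.2 ≤ p.1 ∧ p.1 ≤ g p.2}) =
      (Set.Icc 0 T).indicator (fun y => ENNReal.ofReal (g y - f y)) y := by
    intro y
    by_cases hy : y ∈ Set.Icc 0 T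
    · rw [Set.indicator_of_mem hy, ← Real.volume_Icc]
      congr 1
      ext x
      have := hy.1
      have := hy.2
      simp_all
    · rw [Set.indicator_of_notMem hy]
      rw [← MeasureTheory.measure_empty (μ := (MeasureTheory.volume : MeasureTheory.Measure ℝ))]
      congr 1
      ext x
      simp only [Set.mem_preimage, Set.mem_ofPred_eq, Set.mem_empty_iff_false, iff_false]
      exact fun h => hy h.1
  simp_rw [h1]
  rw [MeasureTheory.lintegral_indicator measurableSet_Icc,
    intervalIntegral.integral_of_le hT, ← MeasureTheory.integral_Icc_eq_integral_Ioc,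
    MeasureTheory.ofReal_integral_eq_lintegral_ofReal]
  · exact (hg.sub hf).continuousOn.integrableOn_Icc
  · rw [Filter.EventuallyLE, MeasureTheory.ae_restrict_iff' measurableSet_Icc]
    exact Filter.Eventually.of_forall fun y hy => sub_nonneg.2 (hfg y hy.1 hy.2)

lemma mem_of_slice {S : Set (ℝ × ℝ)} (hS : Convex ℝ S) {a b x y : ℝ} (ha : (a, y) ∈ S)
    (hb : (b, y) ∈ S) (h1 : a ≤ x) (h2 : x ≤ b) : (x, y) ∈ S := by
  have hx : x ∈ segment ℝ a b := by
    rw [segment_eq_Icc (h1.trans h2)]; exact ⟨h1, h2⟩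
  obtain ⟨s, t, hs, ht, hst, rfl⟩ := hx
  have := hS ha hb hs ht hst
  convert this using 1
  ext
  · simp
  · simp [← add_mul, hst]

lemma newtonTriangle_eq (m l : ℕ) (h : m ≤ l) : newtonTriangle m l =
    {p : ℝ × ℝ | (0 ≤ p.2 ∧ p.2 ≤ 1) ∧ (1 - p.2) * m ≤ p.1 ∧ p.1 ≤ (1 - p.2) * l} := by
  have h' : (m : ℝ) ≤ l := by exact_mod_cast h
  apply Set.Subset.antisymm
  · apply convexHull_min
    · rintro p (rfl | rfl | rfl) <;> simp [h']
    · rintro ⟨x, y⟩ ⟨⟨h1, h2⟩, h3, h4⟩ ⟨x', y'⟩ ⟨⟨h1', h2'⟩, h3', h4'⟩ s t hs ht hst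
      obtain rfl : t = 1 - s := by linarith
      simp only [Prod.smul_mk, Prod.mk_add_mk, smul_eq_mul, Set.mem_ofPred_eq] at *
      refine ⟨⟨by positivity, by nlinarith⟩, ?_, ?_⟩
      · nlinarith [mul_le_mul_of_nonneg_left h3 hs, mul_le_mul_of_nonneg_left h3' ht]
      · nlinarith [mul_le_mul_of_nonneg_left h4 hs, mul_le_mul_of_nonneg_left h4' ht]
  · rintro ⟨x, y⟩ ⟨⟨h1, h2⟩, h3, h4⟩
    simp only at h1 h2 h3 h4
    have hc : Convex ℝ (newtonTriangle m l) := convex_convexHull _ _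
    have h0 : ((0:ℝ), (1:ℝ)) ∈ newtonTriangle m l := subset_convexHull _ _ (by simp)
    have hm : ((m:ℝ), (0:ℝ)) ∈ newtonTriangle m l := subset_convexHull _ _ (by simp)
    have hl : ((l:ℝ), (0:ℝ)) ∈ newtonTriangle m l := subset_convexHull _ _ (by simp)
    refine mem_of_slice hc ?_ ?_ h3 h4
    · simpa using hc h0 hm h1 (sub_nonneg.2 h2) (by ring)
    · simpa using hc h0 hl h1 (sub_nonneg.2 h2) (by ring)

lemma sum_eq (mi li mj lj : ℕ) (hi : mi ≤ li) (hj : mj ≤ lj) :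
    newtonTriangle mi li + newtonTriangle mj lj =
    {p : ℝ × ℝ | (0 ≤ p.2 ∧ p.2 ≤ 2) ∧
      max ((2 - p.2) * min (mi:ℝ) mj) (min (mi:ℝ) mj + (1 - p.2) * max (mi:ℝ) mj) ≤ p.1 ∧
      p.1 ≤ min ((2 - p.2) * max (li:ℝ) lj) (max (li:ℝ) lj + (1 - p.2) * min (li:ℝ) lj)} := by
  have hc : Convex ℝ (newtonTriangle mi li + newtonTriangle mj lj) :=
    (convex_convexHull _ _).add (convex_convexHull _ _)
  have hi' : (mi : ℝ) ≤ li := by exact_mod_cast hi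
  have hj' : (mj : ℝ) ≤ lj := by exact_mod_cast hj
  have key : ∀ a b y : ℝ, 0 ≤ y → y ≤ 2 → (mi:ℝ) ≤ a → a ≤ li → (mj:ℝ) ≤ b → b ≤ lj →
      (1 ≤ y → ((2 - y) * a, y) ∈ newtonTriangle mi li + newtonTriangle mj lj ∧
        ((2 - y) * b, y) ∈ newtonTriangle mi li + newtonTriangle mj lj) ∧
      (y ≤ 1 → (a + (1 - y) * b, y) ∈ newtonTriangle mi li + newtonTriangle mj lj ∧
        (b + (1 - y) * a, y) ∈ newtonTriangle mi li + newtonTriangle mj lj) := by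
    intro a b y h0 h2 ha1 ha2 hb1 hb2
    rw [newtonTriangle_eq mi li hi, newtonTriangle_eq mj lj hj]
    refine ⟨fun h => ⟨?_, ?_⟩, fun h => ⟨?_, ?_⟩⟩
    · refine Set.mem_add.2 ⟨((2 - y) * a, y - 1), ?_, (0, 1), ?_, ?_⟩
      · refine ⟨⟨?_, ?_⟩, ?_, ?_⟩ <;> simp only <;> nlinarith
      · simp
      · simp
    · refine Set.mem_add.2 ⟨(0, 1), ?_, ((2 - y) * b, y - 1), ?_, ?_⟩
      · simp
      · refine ⟨⟨?_, ?_⟩, ?_, ?_⟩ <;> simp only <;> nlinarith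
      · simp
    · refine Set.mem_add.2 ⟨(a, 0), ?_, ((1 - y) * b, y), ?_, ?_⟩
      · simp [ha1, ha2]
      · refine ⟨⟨?_, ?_⟩, ?_, ?_⟩ <;> simp only <;> nlinarith
      · simp
    · refine Set.mem_add.2 ⟨((1 - y) * a, y), ?_, (b, 0), ?_, ?_⟩
      · refine ⟨⟨?_, ?_⟩, ?_, ?_⟩ <;> simp only <;> nlinarith
      · simp [hb1, hb2]
      · simp [add_comm]
  apply Set.Subset.antisymm
  · intro p hp
    rw [newtonTriangle_eq mi li hi, newtonTriangle_eq mj lj hj] at hp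
    obtain ⟨⟨x, y⟩, ⟨⟨h1, h2⟩, h3, h4⟩, ⟨x', y'⟩, ⟨⟨h1', h2'⟩, h3', h4'⟩, rfl⟩ := Set.mem_add.1 hp
    simp only [Prod.mk_add_mk, Set.mem_ofPred_eq, max_le_iff, le_min_iff] at *
    refine ⟨⟨by linarith, by linarith⟩, ⟨?_, ?_⟩, ?_, ?_⟩
    · nlinarith [min_le_left (mi:ℝ) mj, min_le_right (mi:ℝ) mj]
    · rcases le_total (mi:ℝ) mj with h | h <;> simp only [min_eq_left, min_eq_right, max_eq_left, max_eq_right, h] <;> nlinarith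
    · nlinarith [le_max_left (li:ℝ) lj, le_max_right (li:ℝ) lj]
    · rcases le_total (li:ℝ) lj with h | h <;> simp only [min_eq_left, min_eq_right, max_eq_left, max_eq_right, h] <;> nlinarith
  · rintro ⟨x, y⟩ ⟨⟨h1, h2⟩, h3, h4⟩
    simp only [max_le_iff, le_min_iff] at h1 h2 h3 h4
    have km := key mi mj y h1 h2 le_rfl hi' le_rfl hj'
    have kl := key li lj y h1 h2 hi' le_rfl hj' le_rfl
    rcases le_total y 1 with h | h
    · refine mem_of_slice hc ?_ ?_ h3.2 h4.2
      · rcases le_total (mi:ℝ) mj with h' | h' <;> simp only [min_eq_left, min_eq_right, max_eq_left, max_eq_right, h']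
        exacts [(km.2 h).1, (km.2 h).2]
      · rcases le_total (li:ℝ) lj with h' | h' <;> simp only [min_eq_left, min_eq_right, max_eq_left, max_eq_right, h']
        exacts [(kl.2 h).2, (kl.2 h).1]
    · refine mem_of_slice hc ?_ ?_ h3.1 h4.1
      · rcases le_total (mi:ℝ) mj with h' | h' <;> simp only [min_eq_left, min_eq_right, h']
        exacts [(km.1 h).1, (km.1 h).2]
      · rcases le_total (li:ℝ) lj with h' | h' <;> simp only [max_eq_left, max_eq_right, h']
        exacts [(kl.1 h).2, (kl.1 h).1]

lemma integral_affine (a b s t : ℝ) :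
    ∫ y in s..t, (a + b * y) = a * (t - s) + b * ((t ^ 2 - s ^ 2) / 2) := by
  rw [intervalIntegral.integral_add (by simp)
    ((by fun_prop : Continuous fun y : ℝ => b * y).intervalIntegrable _ _)]
  rw [intervalIntegral.integral_const_mul, integral_id, intervalIntegral.integral_const,
    smul_eq_mul, mul_comm a]

lemma volume_triangle (m l : ℕ) (h : m ≤ l) :
    MeasureTheory.volume (newtonTriangle m l) = ENNReal.ofReal (((l:ℝ) - m) / 2) := by
  have h' : (m : ℝ) ≤ l := by exact_mod_cast h
  rw [newtonTriangle_eq m l h,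
    area_between (fun y => (1 - y) * m) (fun y => (1 - y) * l) 1 zero_le_one
      (by fun_prop) (by fun_prop)
      (fun y _ h1 => mul_le_mul_of_nonneg_left h' (sub_nonneg.2 h1))]
  congr 1
  have : (fun y : ℝ => (1 - y) * (l:ℝ) - (1 - y) * m) =
      fun y => ((l:ℝ) - m) + (m - l) * y := by ext y; ring
  rw [this, integral_affine]
  ring

lemma volume_sum (mi li mj lj : ℕ) (hi : mi ≤ li) (hj : mj ≤ lj) :
    MeasureTheory.volume (newtonTriangle mi li + newtonTriangle mj lj) =
      ENNReal.ofReal (((li:ℝ) - mi) / 2 + ((lj:ℝ) - mj) / 2 +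
        (max (li:ℝ) lj - min (mi:ℝ) mj)) := by
  have hi' : (mi : ℝ) ≤ li := by exact_mod_cast hi
  have hj' : (mj : ℝ) ≤ lj := by exact_mod_cast hj
  rw [sum_eq mi li mj lj hi hj]
  have hm := min_add_max (mi:ℝ) mj
  have hl := min_add_max (li:ℝ) lj
  have hmm := min_le_max (a := (mi:ℝ)) (b := mj)
  have hll := min_le_max (a := (li:ℝ)) (b := lj)
  have hML : min (mi:ℝ) mj ≤ max (li:ℝ) lj :=
    (min_le_left _ _).trans (hi'.trans (le_max_left _ _))
  generalize min (mi:ℝ) mj = M at *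
  generalize max (mi:ℝ) mj = M' at *
  generalize min (li:ℝ) lj = L' at *
  generalize max (li:ℝ) lj = L at *
  have e1 : ∀ y : ℝ, y ≤ 1 → min ((2 - y) * L) (L + (1 - y) * L') -
      max ((2 - y) * M) (M + (1 - y) * M') = (L + L' - M - M') + (M' - L') * y := by
    intro y hy
    rw [min_eq_right (by nlinarith), max_eq_right (by nlinarith)]
    ring
  have e2 : ∀ y : ℝ, 1 ≤ y → min ((2 - y) * L) (L + (1 - y) * L') -
      max ((2 - y) * M) (M + (1 - y) * M') = 2 * (L - M) + (M - L) * y := by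
    intro y hy
    rw [min_eq_left (by nlinarith), max_eq_left (by nlinarith)]
    ring
  rw [area_between (fun y => max ((2 - y) * M) (M + (1 - y) * M'))
      (fun y => min ((2 - y) * L) (L + (1 - y) * L')) 2 zero_le_two
      (by fun_prop) (by fun_prop)]
  · congr 1
    have hcont : Continuous fun y : ℝ => min ((2 - y) * L) (L + (1 - y) * L') -
      max ((2 - y) * M) (M + (1 - y) * M') := by fun_prop
    rw [← intervalIntegral.integral_add_adjacent_intervals (b := 1)
      (hcont.intervalIntegrable _ _) (hcont.intervalIntegrable _ _)]
    rw [intervalIntegral.integral_congr (a := 0) (b := 1)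
        (g := fun y => (L + L' - M - M') + (M' - L') * y),
      intervalIntegral.integral_congr (a := 1) (b := 2)
        (g := fun y => 2 * (L - M) + (M - L) * y), integral_affine, integral_affine]
    · linarith
    · intro y hy
      rw [Set.uIcc_of_le (by norm_num)] at hy
      exact e2 y hy.1
    · intro y hy
      rw [Set.uIcc_of_le (by norm_num)] at hy
      exact e1 y hy.2
  · intro y h0 h2
    rw [← sub_nonneg]
    rcases le_total y 1 with h | h
    · simp only [e1 y h]
      nlinarith [mul_nonneg h0 (sub_nonneg.2 hML)]
    · simp only [e2 y h]
      nlinarith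

/-- The mixed volume `vol(Tᵢ + Tⱼ) - vol(Tᵢ) - vol(Tⱼ)` of the two Newton triangles equals
`max(lᵢ, lⱼ) - min(mᵢ, mⱼ)`, the length of the convex hull of the union of the supports. -/
theorem mixedVolume_newtonTriangles (mi li mj lj : ℕ) (hi : mi ≤ li) (hj : mj ≤ lj) :
    MeasureTheory.volume (newtonTriangle mi li + newtonTriangle mj lj) =
      MeasureTheory.volume (newtonTriangle mi li) +
      MeasureTheory.volume (newtonTriangle mj lj) +
      ((max li lj - min mi mj : ℕ) : ENNReal) := by
  have hi' : (mi : ℝ) ≤ li := by exact_mod_cast hi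
  have hj' : (mj : ℝ) ≤ lj := by exact_mod_cast hj
  have hML : min mi mj ≤ max li lj :=
    (min_le_left _ _).trans (hi.trans (le_max_left _ _))
  have hML' : min (mi:ℝ) mj ≤ max (li:ℝ) lj :=
    (min_le_left _ _).trans (hi'.trans (le_max_left _ _))
  rw [volume_sum mi li mj lj hi hj, volume_triangle mi li hi, volume_triangle mj lj hj,
    ← ENNReal.ofReal_natCast, Nat.cast_sub hML, Nat.cast_max, Nat.cast_min,
    ENNReal.ofReal_add (by linarith) (by linarith),
    ENNReal.ofReal_add (by linarith) (by linarith)]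
end

section
/- Fix finite nonempty sets S₀, S₁, S₂ ⊂ ℕ with gcd of the nonzero elements of S₀ ∪ S₁ ∪ S₂ equal to 1 and u := max(max S₀, max S₁, max S₂) ≥ 1, and suppose that for every pair i ≠ j ∈ {0,1,2} one has min(min S_i, min S_j) = 0 and max(max S_i, max S_j) = u (i.e., the convex hull of B_i ∪ B_j equals [0,u] for all pairs, where B_i = [min S_i, max S_i]). Then for generic coefficients, the Newton polygon N(φ) of every irreducible φ ∈ ℂ[x,y] with φ(P₀/Q, P₁/Q) = 0 in ℂ(t) equals the triangle with vertices (0,0), (u,0), (0,u). -/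
open Polynomial

/-- The univariate polynomial with support `S` and coefficient vector `c`. -/
noncomputable def polyOfCoeffs (S : Finset ℕ) (c : {s // s ∈ S} → ℂ) : Polynomial ℂ :=
  ∑ s ∈ S.attach, Polynomial.C (c s) * Polynomial.X ^ (s : ℕ)

/-- The image of that polynomial in the field of rational functions `ℂ(t)`. -/
noncomputable def ratFuncOf (S : Finset ℕ) (c : {s // s ∈ S} → ℂ) : RatFunc ℂ :=
  algebraMap (Polynomial ℂ) (RatFunc ℂ) (polyOfCoeffs S c)

/-- The Newton polygon of a bivariate polynomial: the convex hull in `ℝ²` of its support. -/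
noncomputable def newtonPolygon (φ : MvPolynomial (Fin 2) ℂ) : Set (ℝ × ℝ) :=
  convexHull ℝ ((fun d : Fin 2 →₀ ℕ => ((d 0 : ℝ), (d 1 : ℝ))) '' ↑φ.support)

/-- `φ(P₀/Q, P₁/Q) = 0` in `ℂ(t)`, where `P₀, P₁, Q` have supports `S 0, S 1, S 2`
and coefficient vector `c`. -/
def vanishesSame (S : Fin 3 → Finset ℕ)
    (c : (Σ i : Fin 3, {s // s ∈ S i}) → ℂ) (φ : MvPolynomial (Fin 2) ℂ) : Prop :=
  MvPolynomial.aeval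
    ![ratFuncOf (S 0) (fun s => c ⟨0, s⟩) / ratFuncOf (S 2) (fun s => c ⟨2, s⟩),
      ratFuncOf (S 1) (fun s => c ⟨1, s⟩) / ratFuncOf (S 2) (fun s => c ⟨2, s⟩)] φ = 0

section Helpers

open IntermediateField algebraAdjoinAdjoin

lemma adj_natDegree {z y : RatFunc ℂ} {u : ℕ} (hu1 : 1 ≤ u)
    (hfin : Module.finrank ℂ⟮z⟯ (RatFunc ℂ) = u) (htop : ℂ⟮z, y⟯ = ⊤) :
    IsIntegral ℂ⟮z⟯ y ∧ (minpoly ℂ⟮z⟯ y).natDegree = u := by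
  have hfd : FiniteDimensional ℂ⟮z⟯ (RatFunc ℂ) := Module.finite_of_finrank_pos (by omega)
  have hi : IsIntegral ℂ⟮z⟯ y := IsIntegral.of_finite _ _
  refine ⟨hi, ?_⟩
  rw [← adjoin.finrank hi]
  have : (ℂ⟮z⟯)⟮y⟯ = ⊤ := by
    rw [← restrictScalars_eq_top_iff (K := ℂ), adjoin_simple_adjoin_simple, htop]
  rw [this, finrank_top', hfin]

lemma main_deg {z y : RatFunc ℂ} {u : ℕ} (hu1 : 1 ≤ u)
    (hfin : Module.finrank ℂ⟮z⟯ (RatFunc ℂ) = u) (htop : ℂ⟮z, y⟯ = ⊤)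
    (p : ℂ[X][X]) (hp0 : p ≠ 0) (hp : aevalAeval z y p = 0) :
    u ≤ p.natDegree ∧ (Irreducible p → p.natDegree = u) := by
  obtain ⟨hi, hd⟩ := adj_natDegree hu1 hfin htop
  have hC : ¬∃ c, z = RatFunc.C c := by
    rintro ⟨c, rfl⟩
    rw [RatFunc.finrank_eq_max_natDegree] at hfin
    simp at hfin
    omega
  have htr := z.transcendental_of_ne_C hC
  let e := Polynomial.algEquivOfTranscendental ℂ z htr
  let q := (p.mapEquiv e.toRingEquiv)
  let r := q.map (algebraMap (Algebra.adjoin ℂ {z}) ℂ⟮z⟯)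
  have hq0 : q ≠ 0 := by
    exact (map_ne_zero_iff _ (mapEquiv e.toRingEquiv).injective).mpr hp0
  have hinj : Function.Injective (algebraMap (Algebra.adjoin ℂ {z}) ℂ⟮z⟯) :=
    IsFractionRing.injective _ _
  have hr0 : r ≠ 0 := by
    simpa [r, Polynomial.map_eq_zero_iff hinj] using hq0
  have hrd : r.natDegree = p.natDegree := by
    simp only [r, q]
    rw [natDegree_map_eq_of_injective hinj, mapEquiv_apply, natDegree_map_eq_of_injective]
    exact e.injective
  have hr : aeval y r = 0 := by
    have hp : p.eval₂ (aeval z).toRingHom y = 0 := by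
      rw [← hp]
      have hh : eval₂RingHom (aeval z).toRingHom y = (aevalAeval z y : ℂ[X][X] →ₐ[ℂ] RatFunc ℂ).toRingHom := by
        ext <;> simp
      exact congrArg (fun f => f p) hh
    rw [← hp]
    simp only [r, q, mapEquiv_apply, aeval_def, eval₂_map]
    congr 1
    ext <;> simp [e]
  refine ⟨?_, fun hirr => ?_⟩
  · rw [← hd, ← hrd]
    exact natDegree_le_natDegree (minpoly.degree_le_of_ne_zero _ _ hr0 hr)
  · have : UniqueFactorizationMonoid (Algebra.adjoin ℂ {z}) :=
      htr.uniqueFactorizationMonoid_adjoin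
    have hqi : Irreducible q := by
      simp only [q]
      rwa [MulEquiv.irreducible_iff]
    have hpos : q.natDegree ≠ 0 := by
      intro h0
      have h1 : r.natDegree = 0 := by
        simp only [r]
        rw [natDegree_map_eq_of_injective hinj, h0]
      have h2 := natDegree_le_natDegree (minpoly.degree_le_of_ne_zero _ _ hr0 hr)
      omega
    have hri : Irreducible r :=
      (hqi.isPrimitive hpos).irreducible_iff_irreducible_map_fraction_map.1 hqi
    rw [← hd, ← hrd, ← minpoly.eq_of_irreducible hri hr, mul_comm, natDegree_C_mul]
    exact inv_ne_zero (leadingCoeff_ne_zero.mpr hr0)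

/-- φ(x - l y, y) -/
noncomputable def shear (l : ℂ) : MvPolynomial (Fin 2) ℂ →ₐ[ℂ] ℂ[X][X] :=
  MvPolynomial.aeval ![C X - C (C l) * X, X]

/-- φ(x y, y) -/
noncomputable def conic : MvPolynomial (Fin 2) ℂ →ₐ[ℂ] ℂ[X][X] :=
  MvPolynomial.aeval ![C X * X, X]

/-- φ(y, x) -/
noncomputable def swp : MvPolynomial (Fin 2) ℂ →ₐ[ℂ] ℂ[X][X] :=
  MvPolynomial.aeval ![X, C X]

lemma shear_irreducible (l : ℂ) {φ : MvPolynomial (Fin 2) ℂ} (h : Irreducible φ) :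
    Irreducible (shear l φ) := by
  let g : ℂ[X][X] →ₐ[ℂ] MvPolynomial (Fin 2) ℂ :=
    aevalAeval (MvPolynomial.X 0 + MvPolynomial.C l * MvPolynomial.X 1) (MvPolynomial.X 1)
  let e : MvPolynomial (Fin 2) ℂ ≃ₐ[ℂ] ℂ[X][X] := AlgEquiv.ofAlgHom (shear l) g
    (by
      ext <;> simp [shear, g, Algebra.algebraMap_eq_smul_one, Polynomial.smul_eq_C_mul])
    (by
      ext i : 1
      fin_cases i <;> simp [shear, g, MvPolynomial.algebraMap_eq])
  exact (MulEquiv.irreducible_iff e).2 h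

lemma fin2_ext (m n : Fin 2 →₀ ℕ) : n = m ↔ n 0 = m 0 ∧ n 1 = m 1 := by
  constructor
  · rintro rfl; simp
  · rintro ⟨h0, h1⟩
    ext i; fin_cases i <;> simpa

lemma std_monomial (n : Fin 2 →₀ ℕ) (a : ℂ) :
    shear 0 (MvPolynomial.monomial n a) = C (C a * X ^ (n 0)) * X ^ (n 1) := by
  simp [shear, MvPolynomial.aeval_monomial, Finsupp.prod_fintype, mul_assoc]
lemma swp_monomial (n : Fin 2 →₀ ℕ) (a : ℂ) :
    swp (MvPolynomial.monomial n a) = C (C a * X ^ (n 1)) * X ^ (n 0) := by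
  simp [swp, MvPolynomial.aeval_monomial, Finsupp.prod_fintype, mul_assoc]
  exact Or.inl (by ring)
lemma conic_monomial (n : Fin 2 →₀ ℕ) (a : ℂ) :
    conic (MvPolynomial.monomial n a) = C (C a * X ^ (n 0)) * X ^ (n 0 + n 1) := by
  simp [conic, MvPolynomial.aeval_monomial, Finsupp.prod_fintype, mul_assoc]
  exact Or.inl (by ring)

lemma std_coeff (φ : MvPolynomial (Fin 2) ℂ) (m : Fin 2 →₀ ℕ) :
    ((shear 0 φ).coeff (m 1)).coeff (m 0) = φ.coeff m := by
  induction φ using MvPolynomial.induction_on' with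
  | monomial n a =>
    rw [std_monomial, MvPolynomial.coeff_monomial, coeff_C_mul, coeff_X_pow, mul_ite, apply_ite (fun p : ℂ[X] => p.coeff (m 0))]
    simp only [mul_one, coeff_C_mul, coeff_X_pow, mul_zero, coeff_zero, fin2_ext]
    grind
  | add p q hp hq => simp [hp, hq]
lemma swp_coeff (φ : MvPolynomial (Fin 2) ℂ) (m : Fin 2 →₀ ℕ) :
    ((swp φ).coeff (m 0)).coeff (m 1) = φ.coeff m := by
  induction φ using MvPolynomial.induction_on' with
  | monomial n a =>
    rw [swp_monomial, MvPolynomial.coeff_monomial, coeff_C_mul, coeff_X_pow, mul_ite, apply_ite (fun p : ℂ[X] => p.coeff (m 1))]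
    simp only [mul_one, coeff_C_mul, coeff_X_pow, mul_zero, coeff_zero, fin2_ext]
    grind
  | add p q hp hq => simp [hp, hq]
lemma conic_coeff (φ : MvPolynomial (Fin 2) ℂ) (m : Fin 2 →₀ ℕ) :
    ((conic φ).coeff (m 0 + m 1)).coeff (m 0) = φ.coeff m := by
  induction φ using MvPolynomial.induction_on' with
  | monomial n a =>
    rw [conic_monomial, MvPolynomial.coeff_monomial, coeff_C_mul, coeff_X_pow, mul_ite, apply_ite (fun p : ℂ[X] => p.coeff (m 0))]
    simp only [mul_one, coeff_C_mul, coeff_X_pow, mul_zero, coeff_zero, fin2_ext]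
    grind
  | add p q hp hq => simp [hp, hq]

lemma inj_of_coeff {f : MvPolynomial (Fin 2) ℂ →ₐ[ℂ] ℂ[X][X]} (a b : (Fin 2 →₀ ℕ) → ℕ)
    (h : ∀ φ m, ((f φ).coeff (a m)).coeff (b m) = φ.coeff m) {φ : MvPolynomial (Fin 2) ℂ}
    (hφ : φ ≠ 0) : f φ ≠ 0 := by
  intro h0
  apply hφ
  ext m
  rw [← h, h0]; simp

lemma conic_natDegree {φ : MvPolynomial (Fin 2) ℂ} {u : ℕ} (h : ∀ m ∈ φ.support, m 0 + m 1 ≤ u) :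
    (conic φ).natDegree ≤ u := by
  rw [φ.as_sum, map_sum]
  refine natDegree_sum_le_of_forall_le _ _ fun m hm => ?_
  rw [conic_monomial]
  exact (natDegree_C_mul_X_pow_le _ _).trans (h m hm)

lemma conic_coeff_zero (φ : MvPolynomial (Fin 2) ℂ) :
    (conic φ).coeff 0 = C (φ.coeff 0) := by
  induction φ using MvPolynomial.induction_on' with
  | monomial n a =>
    rw [conic_monomial, MvPolynomial.coeff_monomial, coeff_C_mul, coeff_X_pow]
    simp only [fin2_ext]
    by_cases h : n 0 = 0 <;> by_cases h' : n 1 = 0 <;> simp [h, h'] <;> intro h3 <;> omega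
  | add p q hp hq => simp [hp, hq]

lemma shear_conic (l : ℂ) (φ : MvPolynomial (Fin 2) ℂ) :
    (shear l φ).map (evalRingHom 0) = (conic φ).map (evalRingHom (-l)) := by
  induction φ using MvPolynomial.induction_on with
  | C a => simp [shear, conic, MvPolynomial.algHom_C]
  | add p q hp hq => simp [hp, hq]
  | mul_X p i hp =>
    rw [map_mul, map_mul, Polynomial.map_mul, Polynomial.map_mul, hp]
    congr 1
    fin_cases i <;> simp [shear, conic]

lemma total_le {φ : MvPolynomial (Fin 2) ℂ} {u : ℕ} {T : Set ℂ} (hT : T.Finite)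
    (h : ∀ l ∉ T, (shear l φ).natDegree ≤ u) : ∀ m ∈ φ.support, m 0 + m 1 ≤ u := by
  intro m hm
  by_contra hlt
  push Not at hlt
  rw [MvPolynomial.mem_support_iff, ← conic_coeff] at hm
  apply hm
  have : (conic φ).coeff (m 0 + m 1) = 0 := by
    apply eq_zero_of_infinite_isRoot
    apply ((hT.infinite_compl).image (f := fun l => -l) neg_injective.injOn).mono
    rintro _ ⟨l, hl, rfl⟩
    simp only [Set.mem_ofPred_eq, IsRoot.def]
    have h1 := congrArg (fun p => p.coeff (m 0 + m 1)) (shear_conic l φ)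
    simp only [coeff_map, coe_evalRingHom] at h1
    rw [← h1, coeff_eq_zero_of_natDegree_lt ((h l hl).trans_lt hlt)]
    simp
  rw [this]; simp

lemma std_top {φ : MvPolynomial (Fin 2) ℂ} {u : ℕ} (h : ∀ m ∈ φ.support, m 0 + m 1 ≤ u)
    (hφ : φ ≠ 0) (hd : u ≤ (shear 0 φ).natDegree) : ∃ m ∈ φ.support, m 0 = 0 ∧ m 1 = u := by
  have h0 : shear 0 φ ≠ 0 := inj_of_coeff (fun m => m 1) (fun m => m 0) std_coeff hφ
  set j := (shear 0 φ).natDegree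
  have h1 : (shear 0 φ).coeff j ≠ 0 := leadingCoeff_ne_zero.2 h0
  set i := ((shear 0 φ).coeff j).natDegree
  have h2 : ((shear 0 φ).coeff j).coeff i ≠ 0 := leadingCoeff_ne_zero.2 h1
  let m : Fin 2 →₀ ℕ := Finsupp.equivFunOnFinite.symm ![i, j]
  have hm : m ∈ φ.support := by
    rw [MvPolynomial.mem_support_iff, ← std_coeff]
    simpa [m] using h2
  have := h m hm
  simp [m] at this
  exact ⟨m, hm, by simp [m]; omega, by simp [m]; omega⟩

lemma swp_top {φ : MvPolynomial (Fin 2) ℂ} {u : ℕ} (h : ∀ m ∈ φ.support, m 0 + m 1 ≤ u)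
    (hφ : φ ≠ 0) (hd : u ≤ (swp φ).natDegree) : ∃ m ∈ φ.support, m 0 = u ∧ m 1 = 0 := by
  have h0 : swp φ ≠ 0 := inj_of_coeff (fun m => m 0) (fun m => m 1) swp_coeff hφ
  set j := (swp φ).natDegree
  have h1 : (swp φ).coeff j ≠ 0 := leadingCoeff_ne_zero.2 h0
  set i := ((swp φ).coeff j).natDegree
  have h2 : ((swp φ).coeff j).coeff i ≠ 0 := leadingCoeff_ne_zero.2 h1
  let m : Fin 2 →₀ ℕ := Finsupp.equivFunOnFinite.symm ![j, i]
  have hm : m ∈ φ.support := by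
    rw [MvPolynomial.mem_support_iff, ← swp_coeff]
    simpa [m] using h2
  have := h m hm
  simp [m] at this
  exact ⟨m, hm, by simp [m]; omega, by simp [m]; omega⟩

lemma finrank_div {P Q : ℂ[X]} (h : IsCoprime P Q) {u : ℕ}
    (hu : max P.natDegree Q.natDegree = u) (hQ : Q ≠ 0) :
    Module.finrank ℂ⟮(algebraMap ℂ[X] (RatFunc ℂ) P / algebraMap ℂ[X] (RatFunc ℂ) Q)⟯ (RatFunc ℂ) = u := by
  rw [RatFunc.finrank_eq_max_natDegree, ← hu]
  set z := (algebraMap ℂ[X] (RatFunc ℂ) P / algebraMap ℂ[X] (RatFunc ℂ) Q) with hz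
  have h1 : z.num * Q = P * z.denom := by
    apply RatFunc.algebraMap_injective ℂ
    rw [map_mul, map_mul]
    have := RatFunc.num_div_denom z
    rw [hz, div_eq_div_iff] at this
    · rw [this]
    · exact RatFunc.algebraMap_ne_zero z.denom_ne_zero
    · exact RatFunc.algebraMap_ne_zero hQ
  have hc := z.isCoprime_num_denom
  have e1 : Associated z.num P := associated_of_dvd_dvd
    (hc.dvd_of_dvd_mul_right (Dvd.intro _ h1)) (h.dvd_of_dvd_mul_right (Dvd.intro _ h1.symm))
  have e2 : Associated z.denom Q := associated_of_dvd_dvd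
    (hc.symm.dvd_of_dvd_mul_left (Dvd.intro_left _ h1.symm |>.trans (by rfl)))
    (h.symm.dvd_of_dvd_mul_left (Dvd.intro_left _ h1))
  rw [natDegree_eq_of_degree_eq (degree_eq_degree_of_associated e1),
    natDegree_eq_of_degree_eq (degree_eq_degree_of_associated e2)]

lemma ne_zero_of_coprime {A B : ℂ[X]} {u : ℕ} (hu1 : 1 ≤ u) (h : IsCoprime A B)
    (hd : max A.natDegree B.natDegree = u) : A ≠ 0 ∧ B ≠ 0 := by
  constructor
  · rintro rfl
    rw [isCoprime_zero_left] at h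
    rw [natDegree_eq_zero_of_isUnit h] at hd
    simp at hd; omega
  · rintro rfl
    rw [isCoprime_zero_right] at h
    rw [natDegree_eq_zero_of_isUnit h] at hd
    simp at hd; omega

lemma adjoin_top_of_mem {x y z w : RatFunc ℂ} (h : ℂ⟮x, y⟯ = ⊤) (hx : x ∈ ℂ⟮z, w⟯)
    (hy : y ∈ ℂ⟮z, w⟯) : ℂ⟮z, w⟯ = ⊤ := by
  rw [eq_top_iff, ← h, adjoin_le_iff]
  rintro a (rfl | rfl)
  · exact hx
  · exact hy

lemma mem_fst (z w : RatFunc ℂ) : z ∈ ℂ⟮z, w⟯ := subset_adjoin _ _ (by simp)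
lemma mem_snd (z w : RatFunc ℂ) : w ∈ ℂ⟮z, w⟯ := subset_adjoin _ _ (by simp)

lemma aev_shear (l : ℂ) (z y : RatFunc ℂ) (φ : MvPolynomial (Fin 2) ℂ) :
    aevalAeval z y (shear l φ) = MvPolynomial.aeval ![z - RatFunc.C l * y, y] φ := by
  have : (aevalAeval z y).comp (shear l) = MvPolynomial.aeval ![z - RatFunc.C l * y, y] := by
    ext i
    fin_cases i <;> simp [shear]
  rw [← this]; rfl
lemma aev_swp (z y : RatFunc ℂ) (φ : MvPolynomial (Fin 2) ℂ) :
    aevalAeval z y (swp φ) = MvPolynomial.aeval ![y, z] φ := by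
  have : (aevalAeval z y).comp swp = MvPolynomial.aeval ![y, z] := by
    ext i
    fin_cases i <;> simp [swp]
  rw [← this]; rfl
lemma aev_conic (z y : RatFunc ℂ) (φ : MvPolynomial (Fin 2) ℂ) :
    aevalAeval z y (conic φ) = MvPolynomial.aeval ![z * y, y] φ := by
  have : (aevalAeval z y).comp conic = MvPolynomial.aeval ![z * y, y] := by
    ext i
    fin_cases i
    · simp [conic]; ring
    · simp [conic]
  rw [← this]; rfl

lemma curve_support {P₀ P₁ Q : ℂ[X]} {u : ℕ} (hu1 : 1 ≤ u)
    (c01 : IsCoprime P₀ P₁) (c02 : IsCoprime P₀ Q) (c12 : IsCoprime P₁ Q)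
    (d01 : max P₀.natDegree P₁.natDegree = u) (d02 : max P₀.natDegree Q.natDegree = u)
    (d12 : max P₁.natDegree Q.natDegree = u)
    (htop : ℂ⟮algebraMap ℂ[X] (RatFunc ℂ) P₀ / algebraMap ℂ[X] (RatFunc ℂ) Q,
      algebraMap ℂ[X] (RatFunc ℂ) P₁ / algebraMap ℂ[X] (RatFunc ℂ) Q⟯ = ⊤)
    {φ : MvPolynomial (Fin 2) ℂ} (hφ : Irreducible φ)
    (hv : MvPolynomial.aeval ![algebraMap ℂ[X] (RatFunc ℂ) P₀ / algebraMap ℂ[X] (RatFunc ℂ) Q,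
      algebraMap ℂ[X] (RatFunc ℂ) P₁ / algebraMap ℂ[X] (RatFunc ℂ) Q] φ = 0) :
    (∀ m ∈ φ.support, m 0 + m 1 ≤ u) ∧ (∃ m ∈ φ.support, m 0 = 0 ∧ m 1 = u) ∧
      (∃ m ∈ φ.support, m 0 = u ∧ m 1 = 0) ∧ (∃ m ∈ φ.support, m 0 = 0 ∧ m 1 = 0) := by
  have hP1 := (ne_zero_of_coprime hu1 c01 d01).2
  have hQ := (ne_zero_of_coprime hu1 c02 d02).2
  have hφ0 : φ ≠ 0 := hφ.ne_zero
  have hQ' : algebraMap ℂ[X] (RatFunc ℂ) Q ≠ 0 := RatFunc.algebraMap_ne_zero hQ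
  have hP1' : algebraMap ℂ[X] (RatFunc ℂ) P₁ ≠ 0 := RatFunc.algebraMap_ne_zero hP1
  set x := algebraMap ℂ[X] (RatFunc ℂ) P₀ / algebraMap ℂ[X] (RatFunc ℂ) Q with hx
  set y := algebraMap ℂ[X] (RatFunc ℂ) P₁ / algebraMap ℂ[X] (RatFunc ℂ) Q with hy
  have hy0 : y ≠ 0 := div_ne_zero hP1' hQ'
  have htot : ∀ m ∈ φ.support, m 0 + m 1 ≤ u := by
    let T : Finset ℂ := insert (-(P₀.coeff u / P₁.coeff u))
      (Q.roots.toFinset.image fun r => -(P₀.eval r / P₁.eval r))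
    apply total_le T.finite_toSet
    intro l hl
    rw [Finset.mem_coe] at hl
    simp only [T, Finset.mem_insert, Finset.mem_image, not_or, not_exists, not_and,
      Multiset.mem_toFinset] at hl
    obtain ⟨hl1, hl2⟩ := hl
    have hz : algebraMap ℂ[X] (RatFunc ℂ) (P₀ + C l * P₁) / algebraMap ℂ[X] (RatFunc ℂ) Q
        = x + RatFunc.C l * y := by
      rw [hx, hy, map_add, map_mul, RatFunc.algebraMap_C]; ring
    have hcop : IsCoprime (P₀ + C l * P₁) Q := by
      rw [isCoprime_iff_aeval_ne_zero_of_isAlgClosed (k := ℂ) (K := ℂ)]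
      intro r
      by_contra hcon
      push Not at hcon
      simp only [coe_aeval_eq_eval, eval_add, eval_mul, eval_C] at hcon
      have h1 : P₁.eval r ≠ 0 := by
        have := (isCoprime_iff_aeval_ne_zero_of_isAlgClosed (k := ℂ) (K := ℂ) _ _).1 c12 r
        simp only [coe_aeval_eq_eval] at this
        tauto
      apply hl2 r ((mem_roots hQ).2 hcon.2)
      field_simp
      linear_combination -hcon.1
    have hdeg : max (P₀ + C l * P₁).natDegree Q.natDegree = u := by
      have hle : (P₀ + C l * P₁).natDegree ≤ u := by
        refine (natDegree_add_le _ _).trans (max_le ?_ ?_)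
        · omega
        · refine (natDegree_C_mul_le _ _).trans (by omega)
      rcases (by omega : Q.natDegree = u ∨ (P₀.natDegree = u ∧ P₁.natDegree = u ∧ Q.natDegree < u))
        with h | ⟨h0, h1, h2⟩
      · omega
      · have : (P₀ + C l * P₁).natDegree = u := by
          apply le_antisymm hle
          apply le_natDegree_of_ne_zero
          have h3 : P₁.coeff u ≠ 0 := by rw [← h1]; exact leadingCoeff_ne_zero.2 hP1
          intro h4
          apply hl1
          simp only [coeff_add, coeff_C_mul] at h4
          field_simp
          linear_combination h4
        omega
    have hfin := finrank_div hcop hdeg hQ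
    rw [hz] at hfin
    have htop' : ℂ⟮x + RatFunc.C l * y, y⟯ = ⊤ := by
      refine adjoin_top_of_mem htop ?_ (mem_snd _ _)
      have h1 := sub_mem (mem_fst (x + RatFunc.C l * y) y)
        (mul_mem (IntermediateField.algebraMap_mem ℂ⟮x + RatFunc.C l * y, y⟯ l) (mem_snd _ _))
      convert h1 using 1
      rw [RatFunc.algebraMap_eq_C]; ring
    refine ((main_deg hu1 hfin htop' (shear l φ) (shear_irreducible l hφ).ne_zero ?_).2
      (shear_irreducible l hφ)).le
    rw [aev_shear]
    simpa using hv
  refine ⟨htot, ?_, ?_, ?_⟩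
  · apply std_top htot hφ0
    refine (main_deg hu1 (finrank_div c02 d02 hQ) htop (shear 0 φ)
      (shear_irreducible 0 hφ).ne_zero ?_).1
    rw [aev_shear]
    simpa using hv
  · apply swp_top htot hφ0
    have htop' : ℂ⟮y, x⟯ = ⊤ := adjoin_top_of_mem htop (mem_snd _ _) (mem_fst _ _)
    refine (main_deg hu1 (finrank_div c12 d12 hQ) htop' (swp φ)
      (inj_of_coeff (fun m => m 0) (fun m => m 1) swp_coeff hφ0) ?_).1
    rw [aev_swp]
    exact hv
  · refine ⟨0, ?_, by simp, by simp⟩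
    rw [MvPolynomial.mem_support_iff]
    intro h0
    have hz : algebraMap ℂ[X] (RatFunc ℂ) P₀ / algebraMap ℂ[X] (RatFunc ℂ) P₁ * y = x := by
      rw [hx, hy]; field_simp
    have hfin := finrank_div c01 d01 hP1
    set z := algebraMap ℂ[X] (RatFunc ℂ) P₀ / algebraMap ℂ[X] (RatFunc ℂ) P₁
    have htop' : ℂ⟮z, y⟯ = ⊤ := by
      refine adjoin_top_of_mem htop ?_ (mem_snd _ _)
      rw [← hz]
      exact mul_mem (mem_fst _ _) (mem_snd _ _)
    have hc0 : conic φ ≠ 0 :=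
      inj_of_coeff (fun m => m 0 + m 1) (fun m => m 0) conic_coeff hφ0
    have hev : aevalAeval z y (conic φ) = 0 := by rw [aev_conic, hz]; exact hv
    have hX : X * (conic φ).divX = conic φ := by
      have := X_mul_divX_add (conic φ)
      rwa [conic_coeff_zero, h0, C_0, C_0, add_zero] at this
    have hd0 : (conic φ).divX ≠ 0 := by
      intro h; rw [h, mul_zero] at hX; exact hc0 hX.symm
    have hle := (main_deg hu1 hfin htop' (conic φ).divX hd0 (by
      rw [← hX, map_mul, aevalAeval_Y] at hev
      exact (mul_eq_zero.1 hev).resolve_left hy0)).1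
    have h1 := conic_natDegree htot
    rw [← hX, natDegree_X_mul hd0] at h1
    omega

lemma newton_triangle {φ : MvPolynomial (Fin 2) ℂ} {u : ℕ} (hu1 : 1 ≤ u)
    (h : ∀ m ∈ φ.support, m 0 + m 1 ≤ u) (h1 : ∃ m ∈ φ.support, m 0 = 0 ∧ m 1 = u)
    (h2 : ∃ m ∈ φ.support, m 0 = u ∧ m 1 = 0) (h3 : ∃ m ∈ φ.support, m 0 = 0 ∧ m 1 = 0) :
    convexHull ℝ ((fun d : Fin 2 →₀ ℕ => ((d 0 : ℝ), (d 1 : ℝ))) '' ↑φ.support) =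
    convexHull ℝ {((0 : ℝ), (0 : ℝ)), ((u : ℝ), (0 : ℝ)), ((0 : ℝ), (u : ℝ))} := by
  apply Set.Subset.antisymm
  · apply convexHull_min _ (convex_convexHull ℝ _)
    rintro _ ⟨m, hm, rfl⟩
    have hle := h m hm
    have hu0 : (0 : ℝ) < u := by exact_mod_cast hu1
    have hle' : (m 0 : ℝ) + m 1 ≤ u := by exact_mod_cast hle
    have := (convex_convexHull ℝ {((0 : ℝ), (0 : ℝ)), ((u : ℝ), (0 : ℝ)), ((0 : ℝ), (u : ℝ))}).sum_mem
      (t := Finset.univ) (w := ![1 - ((m 0 : ℝ) + m 1) / u, (m 0 : ℝ) / u, (m 1 : ℝ) / u])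
      (z := ![((0 : ℝ), (0 : ℝ)), ((u : ℝ), (0 : ℝ)), ((0 : ℝ), (u : ℝ))]) ?_ ?_ ?_
    · convert this using 1
      simp [Fin.sum_univ_three]
      constructor <;> field_simp
    · intro i _
      fin_cases i
      · simp only [Fin.zero_eta, Matrix.cons_val_zero, sub_nonneg]
        rw [div_le_one hu0]; exact hle'
      · simp; positivity
      · simp; positivity
    · simp [Fin.sum_univ_three]; field_simp; ring
    · intro i _
      apply subset_convexHull
      fin_cases i <;> simp
  · apply convexHull_mono
    rintro a (rfl | rfl | rfl)
    · obtain ⟨m, hm, e1, e2⟩ := h3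
      exact ⟨m, hm, by simp [e1, e2]⟩
    · obtain ⟨m, hm, e1, e2⟩ := h2
      exact ⟨m, hm, by simp [e1, e2]⟩
    · obtain ⟨m, hm, e1, e2⟩ := h1
      exact ⟨m, hm, by simp [e1, e2]⟩

/-- the difference quotient polynomial -/
noncomputable def DD {R : Type*} [CommRing R] (P Q : R[X]) (r : R) : R[X] :=
  (P * C (Q.eval r) - C (P.eval r) * Q) /ₘ (X - C r)

lemma DD_map {R S : Type*} [CommRing R] [CommRing S] (f : R →+* S) (P Q : R[X]) (r : R) :
    (DD P Q r).map f = DD (P.map f) (Q.map f) (f r) := by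
  simp only [DD]
  rw [map_divByMonic f (monic_X_sub_C r)]
  simp [eval_map, eval₂_at_apply]

lemma DD_mul {R : Type*} [CommRing R] (P Q : R[X]) (r : R) :
    (X - C r) * DD P Q r = P * C (Q.eval r) - C (P.eval r) * Q := by
  rw [DD, mul_divByMonic_eq_iff_isRoot]
  simp [mul_comm]

lemma DD_natDegree {R : Type*} [CommRing R] [Nontrivial R] {P Q : R[X]} (r : R) {u : ℕ}
    (hP : P.natDegree ≤ u) (hQ : Q.natDegree ≤ u) : (DD P Q r).natDegree ≤ u - 1 := by
  rw [DD, natDegree_divByMonic _ (monic_X_sub_C r), natDegree_X_sub_C]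
  refine Nat.sub_le_sub_right ?_ 1
  refine (natDegree_sub_le _ _).trans (max_le ?_ ?_)
  · exact (natDegree_mul_C_le _ _).trans hP
  · exact (natDegree_C_mul_le _ _).trans hQ

lemma DD_coeff {R : Type*} [CommRing R] [Nontrivial R] {P Q : R[X]} (r : R) {u : ℕ} (hu : 1 ≤ u)
    (hP : P.natDegree ≤ u) (hQ : Q.natDegree ≤ u) :
    (DD P Q r).coeff (u - 1) = P.coeff u * Q.eval r - P.eval r * Q.coeff u := by
  have h := congrArg (fun p => p.coeff u) (DD_mul P Q r)
  have h0 : (DD P Q r).coeff u = 0 :=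
    coeff_eq_zero_of_natDegree_lt (by have := DD_natDegree r hP hQ; omega)
  obtain ⟨v, rfl⟩ : ∃ v, u = v + 1 := ⟨u - 1, by omega⟩
  simp only [sub_mul, coeff_sub, coeff_X_mul, coeff_C_mul, h0, coeff_mul_C] at h
  simpa using h

lemma res_iff {K : Type*} [Field K] {f g : K[X]} {m n : ℕ} (hf : f.natDegree ≤ m)
    (hm : f.coeff m ≠ 0) (hg : g.natDegree ≤ n) : resultant f g m n ≠ 0 ↔ IsCoprime f g := by
  have hfm : f.natDegree = m := le_antisymm hf (le_natDegree_of_ne_zero hm)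
  have hf0 : f ≠ 0 := by rintro rfl; simp at hm
  obtain ⟨k, rfl⟩ := Nat.exists_eq_add_of_le hg
  rw [resultant_add_right_deg _ _ _ _ _ le_rfl, ← hfm]
  have hl : f.coeff f.natDegree ≠ 0 := by rw [hfm]; exact hm
  have := resultant_eq_zero_iff (f := f) (g := g)
  simp only [ne_eq, mul_eq_zero, pow_eq_zero_iff', hl, false_and, false_or, this, hf0, not_false_eq_true, true_or, true_and, not_not]

lemma birational {P₀ P₁ Q : ℂ[X]} {u : ℕ} (hu1 : 1 ≤ u) (hQ : Q ≠ 0)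
    (d0 : P₀.natDegree ≤ u) (d1 : P₁.natDegree ≤ u) (d2 : Q.natDegree ≤ u)
    (hlead : (DD P₀ Q 1).coeff (u - 1) ≠ 0) (hc : IsCoprime (DD P₀ Q 1) (DD P₁ Q 1)) :
    ℂ⟮algebraMap ℂ[X] (RatFunc ℂ) P₀ / algebraMap ℂ[X] (RatFunc ℂ) Q,
      algebraMap ℂ[X] (RatFunc ℂ) P₁ / algebraMap ℂ[X] (RatFunc ℂ) Q⟯ = ⊤ := by
  have hQ' : algebraMap ℂ[X] (RatFunc ℂ) Q ≠ 0 := RatFunc.algebraMap_ne_zero hQ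
  set x := algebraMap ℂ[X] (RatFunc ℂ) P₀ / algebraMap ℂ[X] (RatFunc ℂ) Q with hx
  set y := algebraMap ℂ[X] (RatFunc ℂ) P₁ / algebraMap ℂ[X] (RatFunc ℂ) Q with hy
  have hev : ∀ P : ℂ[X], (P.map C).map (evalRingHom (1 : ℂ)) = P := by
    intro P
    rw [Polynomial.map_map]
    have : (evalRingHom (1 : ℂ)).comp C = RingHom.id ℂ := by
      apply RingHom.ext
      intro a; simp
    rw [this, Polynomial.map_id]
  have hd : ∀ P : ℂ[X], (P.map (C : ℂ →+* ℂ[X])).natDegree = P.natDegree := fun P =>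
    natDegree_map_eq_of_injective C_injective P
  have hm1 : ∀ P : ℂ[X], (DD (P.map C) (Q.map C) (X : ℂ[X])).map (evalRingHom 1) = DD P Q 1 := by
    intro P
    rw [DD_map, hev, hev]; simp
  have hm2 : ∀ P : ℂ[X], (DD (P.map C) (Q.map C) (X : ℂ[X])).map (algebraMap ℂ[X] (RatFunc ℂ))
      = DD (P.map (algebraMap ℂ (RatFunc ℂ))) (Q.map (algebraMap ℂ (RatFunc ℂ))) RatFunc.X := by
    intro P
    rw [DD_map, Polynomial.map_map, Polynomial.map_map, RatFunc.algebraMap_X]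
    rfl
  have hinj := RatFunc.algebraMap_injective ℂ
  have hres : resultant (DD (P₀.map C) (Q.map C) (X : ℂ[X])) (DD (P₁.map C) (Q.map C) (X : ℂ[X]))
      (u - 1) (u - 1) ≠ 0 := by
    intro h
    have := congrArg (evalRingHom (1 : ℂ)) h
    rw [← resultant_map_map, hm1, hm1, map_zero] at this
    exact (res_iff (DD_natDegree _ d0 d2) hlead (DD_natDegree _ d1 d2)).2 hc this
  have hcop : IsCoprime
      (DD (P₀.map (algebraMap ℂ (RatFunc ℂ))) (Q.map (algebraMap ℂ (RatFunc ℂ))) RatFunc.X)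
      (DD (P₁.map (algebraMap ℂ (RatFunc ℂ))) (Q.map (algebraMap ℂ (RatFunc ℂ))) RatFunc.X) := by
    rw [← res_iff (m := u - 1) (n := u - 1)]
    · rw [← hm2, ← hm2, resultant_map_map]
      exact fun h => hres (hinj (by rw [h, map_zero]))
    · exact DD_natDegree _ (by simpa using d0) (by simpa using d2)
    · rw [← hm2, coeff_map]
      intro h
      have h2 := hinj (h.trans (map_zero _).symm)
      apply hlead
      rw [← hm1, coeff_map, h2, map_zero]
    · exact DD_natDegree _ (by simpa using d1) (by simpa using d2)
  -- minimal polynomial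
  have key : ∀ (P : ℂ[X]) (w : RatFunc ℂ) (hw : w ∈ ℂ⟮x, y⟯),
      w = algebraMap ℂ[X] (RatFunc ℂ) P / algebraMap ℂ[X] (RatFunc ℂ) Q →
      (minpoly ℂ⟮x, y⟯ (RatFunc.X : RatFunc ℂ)).map (algebraMap _ (RatFunc ℂ)) ∣
      (X - C RatFunc.X) *
      DD (P.map (algebraMap ℂ (RatFunc ℂ))) (Q.map (algebraMap ℂ (RatFunc ℂ))) RatFunc.X := by
    intro P w hw hwe
    have hal : ∀ R : ℂ[X], aeval (RatFunc.X : RatFunc ℂ) R = algebraMap ℂ[X] (RatFunc ℂ) R := by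
      intro R
      exact RatFunc.aeval_X_left_eq_algebraMap R
    let h : (ℂ⟮x, y⟯)[X] := P.map (algebraMap ℂ _) - C ⟨w, hw⟩ * Q.map (algebraMap ℂ _)
    have h1 : aeval (RatFunc.X : RatFunc ℂ) h = 0 := by
      simp only [h, map_sub, map_mul, aeval_map_algebraMap, aeval_C, hal]
      change _ - w * _ = 0
      rw [hwe]; field_simp; simp
    have h2 := Polynomial.map_dvd (algebraMap ℂ⟮x, y⟯ (RatFunc ℂ)) (minpoly.dvd _ _ h1)
    refine h2.trans ⟨C (algebraMap ℂ[X] (RatFunc ℂ) Q), ?_⟩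
    rw [DD_mul]
    simp only [h, Polynomial.map_sub, Polynomial.map_mul, Polynomial.map_map, map_C,
      ← IsScalarTower.algebraMap_eq, eval_map_algebraMap, hal]
    have h3 : algebraMap ℂ⟮x, y⟯ (RatFunc ℂ) ⟨w, hw⟩ = w := rfl
    have h4 : algebraMap ℂ[X] (RatFunc ℂ) P = w * algebraMap ℂ[X] (RatFunc ℂ) Q := by
      rw [hwe]; field_simp
    rw [h3, h4, C_mul]; ring
  have k0 := key P₀ x (mem_fst _ _) hx
  have k1 := key P₁ y (mem_snd _ _) hy
  set m := minpoly ℂ⟮x, y⟯ (RatFunc.X : RatFunc ℂ) with hmdef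
  have hdvd : m.map (algebraMap _ (RatFunc ℂ)) ∣ (X - C RatFunc.X) := by
    obtain ⟨a, b, hab⟩ := hcop
    have : (X - C (RatFunc.X : RatFunc ℂ)) = a * ((X - C RatFunc.X) *
      DD (P₀.map (algebraMap ℂ (RatFunc ℂ))) (Q.map (algebraMap ℂ (RatFunc ℂ))) RatFunc.X) +
      b * ((X - C RatFunc.X) *
      DD (P₁.map (algebraMap ℂ (RatFunc ℂ))) (Q.map (algebraMap ℂ (RatFunc ℂ))) RatFunc.X) := by
      linear_combination -(X - C (RatFunc.X : RatFunc ℂ)) * hab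
    rw [this]
    exact dvd_add (k0.mul_left _) (k1.mul_left _)
  have hdeg := natDegree_le_of_dvd hdvd (X_sub_C_ne_zero _)
  rw [natDegree_map, natDegree_X_sub_C] at hdeg
  have hm0 : m ≠ 0 := by
    intro h
    rw [h, Polynomial.map_zero, zero_dvd_iff] at hdvd
    exact X_sub_C_ne_zero _ hdvd
  have hinteg : IsIntegral ℂ⟮x, y⟯ (RatFunc.X : RatFunc ℂ) := by
    by_contra h
    exact hm0 (minpoly.eq_zero h)
  have hpos : 0 < m.natDegree := minpoly.natDegree_pos hinteg
  have h1 : m.natDegree = 1 := by omega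
  obtain ⟨⟨t, ht⟩, hte⟩ := (minpoly.natDegree_eq_one_iff).1 h1
  have hte' : t = RatFunc.X := hte
  subst hte'
  rw [eq_top_iff, ← RatFunc.adjoin_X, adjoin_simple_le_iff]
  exact ht

lemma poly_eval (S : Finset ℕ) (c : {s // s ∈ S} → ℂ) (r : ℂ) :
    (polyOfCoeffs S c).eval r = ∑ s : {s // s ∈ S}, c s * r ^ (s : ℕ) := by
  simp [polyOfCoeffs, eval_finsetSum]

lemma poly_deriv (S : Finset ℕ) (c : {s // s ∈ S} → ℂ) :
    (polyOfCoeffs S c).derivative.eval 1 = ∑ s : {s // s ∈ S}, c s * (s : ℕ) := by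
  simp [polyOfCoeffs, eval_finsetSum, derivative_sum, derivative_X_pow]

lemma poly_coeff (S : Finset ℕ) (c : {s // s ∈ S} → ℂ) (u : ℕ) :
    (polyOfCoeffs S c).coeff u = ∑ s : {s // s ∈ S}, c s * (if (s : ℕ) = u then 1 else 0) := by
  simp [polyOfCoeffs, coeff_X_pow, eq_comm]

lemma poly_coeff_mem (S : Finset ℕ) (c : {s // s ∈ S} → ℂ) (s : {s // s ∈ S}) :
    (polyOfCoeffs S c).coeff s = c s := by
  rw [poly_coeff, Finset.sum_eq_single s]
  · simp
  · intro b _ hb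
    have : (b : ℕ) ≠ s := fun h => hb (Subtype.ext h)
    simp [this]
  · simp

lemma poly_natDegree (S : Finset ℕ) (c : {s // s ∈ S} → ℂ) {u : ℕ} (h : ∀ s ∈ S, s ≤ u) :
    (polyOfCoeffs S c).natDegree ≤ u := by
  refine natDegree_sum_le_of_forall_le _ _ fun s _ => ?_
  exact (natDegree_C_mul_X_pow_le _ _).trans (h s s.2)

lemma avoid {ι : Type*} [Fintype ι] (W : Set (ι → ℂ)) (hW : W.Finite) (h : ∀ w ∈ W, ∃ s, w s ≠ 0) :
    ∃ c : ι → ℂ, ∀ w ∈ W, ∑ s, c s * w s ≠ 0 := by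
  classical
  let L : (ι → ℂ) → MvPolynomial ι ℂ := fun w => ∑ s, MvPolynomial.X s * MvPolynomial.C (w s)
  have hL : ∀ c w, MvPolynomial.eval c (L w) = ∑ s, c s * w s := by
    intro c w; simp [L]
  have hne : ∏ w ∈ hW.toFinset, L w ≠ 0 := by
    rw [Finset.prod_ne_zero_iff]
    intro w hw h0
    obtain ⟨s, hs⟩ := h w (by simpa using hw)
    have := hL (Pi.single s 1) w
    rw [h0, map_zero] at this
    simp [Pi.single_apply] at this
    exact hs this.symm
  obtain ⟨c, hc⟩ : ∃ c, MvPolynomial.eval c (∏ w ∈ hW.toFinset, L w) ≠ 0 := by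
    by_contra hcon
    push Not at hcon
    exact hne (MvPolynomial.funext fun c => by rw [hcon, map_zero])
  refine ⟨c, fun w hw => ?_⟩
  rw [map_prod, Finset.prod_ne_zero_iff] at hc
  rw [← hL]
  exact hc w (by simpa using hw)

lemma open_coprime {σ : Type*} {f g : (MvPolynomial σ ℂ)[X]} {m n : ℕ} (hf : f.natDegree ≤ m)
    (hg : g.natDegree ≤ n) (c₀ : σ → ℂ)
    (hm : (f.map (MvPolynomial.eval c₀)).coeff m ≠ 0)
    (hc : IsCoprime (f.map (MvPolynomial.eval c₀)) (g.map (MvPolynomial.eval c₀))) :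
    ∃ G : MvPolynomial σ ℂ, G ≠ 0 ∧ ∀ c : σ → ℂ, MvPolynomial.eval c G ≠ 0 →
      (f.map (MvPolynomial.eval c)).coeff m ≠ 0 ∧
      IsCoprime (f.map (MvPolynomial.eval c)) (g.map (MvPolynomial.eval c)) := by
  have key : ∀ c : σ → ℂ, MvPolynomial.eval c (f.coeff m * resultant f g m n) ≠ 0 ↔
      ((f.map (MvPolynomial.eval c)).coeff m ≠ 0 ∧
      IsCoprime (f.map (MvPolynomial.eval c)) (g.map (MvPolynomial.eval c))) := by
    intro c
    rw [map_mul, ← resultant_map_map, mul_ne_zero_iff, coeff_map]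
    refine and_congr_right fun h => ?_
    exact res_iff (natDegree_map_le.trans hf) (by rwa [coeff_map]) (natDegree_map_le.trans hg)
  refine ⟨_, ?_, fun c hc => (key c).1 hc⟩
  intro h0
  exact (key c₀).2 ⟨hm, hc⟩ (by rw [h0, map_zero])

/-- universal polynomial -/
noncomputable def univPoly (S : Fin 3 → Finset ℕ) (i : Fin 3) :
    (MvPolynomial (Σ i : Fin 3, {s // s ∈ S i}) ℂ)[X] :=
  ∑ s ∈ (S i).attach, C (MvPolynomial.X ⟨i, s⟩) * X ^ (s : ℕ)

lemma univPoly_map (S : Fin 3 → Finset ℕ) (i : Fin 3) (c : (Σ i : Fin 3, {s // s ∈ S i}) → ℂ) :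
    (univPoly S i).map (MvPolynomial.eval c) = polyOfCoeffs (S i) (fun s => c ⟨i, s⟩) := by
  simp [univPoly, polyOfCoeffs, Polynomial.map_sum]

lemma univPoly_natDegree (S : Fin 3 → Finset ℕ) (i : Fin 3) {u : ℕ} (h : ∀ s ∈ S i, s ≤ u) :
    (univPoly S i).natDegree ≤ u := by
  refine natDegree_sum_le_of_forall_le _ _ fun s _ => ?_
  exact (natDegree_C_mul_X_pow_le _ _).trans (h s s.2)

lemma pair_coprime (A B : Finset ℕ) (hA : A.Nonempty) (hB : B.Nonempty) (h0 : 0 ∈ A ∨ 0 ∈ B) :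
    ∃ (a : {s // s ∈ A} → ℂ) (b : {s // s ∈ B} → ℂ), (∀ s, a s ≠ 0) ∧
      IsCoprime (polyOfCoeffs A a) (polyOfCoeffs B b) := by
  let a : {s // s ∈ A} → ℂ := fun _ => 1
  let P := polyOfCoeffs A a
  have hP : P ≠ 0 := by
    obtain ⟨s, hs⟩ := hA
    intro h
    have := poly_coeff_mem A a ⟨s, hs⟩
    change P.coeff s = 1 at this
    rw [h] at this
    simp at this
  obtain ⟨b, hb⟩ := avoid
    ((fun (r : ℂ) (s : {s // s ∈ B}) => r ^ (s : ℕ)) '' (P.roots.toFinset : Set ℂ))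
    (Set.Finite.image _ (Finset.finite_toSet _)) (by
      rintro _ ⟨r, hr, rfl⟩
      by_cases hr0 : r = 0
      · subst hr0
        have hA0 : 0 ∉ A := by
          intro hA0
          have h1 := poly_coeff_mem A a ⟨0, hA0⟩
          simp only [Finset.mem_coe, Multiset.mem_toFinset, mem_roots hP, IsRoot.def] at hr
          rw [← coeff_zero_eq_eval_zero] at hr
          change P.coeff 0 = 1 at h1
          rw [hr] at h1
          simp at h1
        exact ⟨⟨0, h0.resolve_left hA0⟩, by simp⟩
      · obtain ⟨s, hs⟩ := hB
        exact ⟨⟨s, hs⟩, pow_ne_zero _ hr0⟩)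
  refine ⟨a, b, fun s => one_ne_zero, ?_⟩
  rw [isCoprime_iff_aeval_ne_zero_of_isAlgClosed (k := ℂ) (K := ℂ)]
  intro r
  by_cases hr : P.eval r = 0
  · right
    rw [coe_aeval_eq_eval, poly_eval]
    exact hb _ ⟨r, by simpa [hP] using hr, rfl⟩
  · left
    exact hr

lemma exists_special (S : Fin 3 → Finset ℕ) (hne : ∀ i, (S i).Nonempty)
    (hgcd : ((S 0 ∪ S 1 ∪ S 2).filter (fun s => s ≠ 0)).gcd id = 1)
    {u : ℕ} (hu1 : 1 ≤ u) (hle : ∀ i, ∀ s ∈ S i, s ≤ u)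
    (hz : ∀ i j, i ≠ j → 0 ∈ S i ∨ 0 ∈ S j) (hU : ∀ i j, i ≠ j → u ∈ S i ∨ u ∈ S j) :
    ∃ c : (Σ i : Fin 3, {s // s ∈ S i}) → ℂ,
      (DD (polyOfCoeffs (S 0) (fun s => c ⟨0, s⟩)) (polyOfCoeffs (S 2) (fun s => c ⟨2, s⟩)) 1).coeff
        (u - 1) ≠ 0 ∧
      IsCoprime
      (DD (polyOfCoeffs (S 0) (fun s => c ⟨0, s⟩)) (polyOfCoeffs (S 2) (fun s => c ⟨2, s⟩)) 1)
      (DD (polyOfCoeffs (S 1) (fun s => c ⟨1, s⟩)) (polyOfCoeffs (S 2) (fun s => c ⟨2, s⟩)) 1) := by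
  -- elements of S i and S 2 that differ
  have hdiff : ∀ i : Fin 3, i ≠ 2 → ∃ a ∈ S i, ∃ b ∈ S 2, a ≠ b := by
    intro i hi
    by_contra hcon
    push Not at hcon
    obtain ⟨a, ha⟩ := hne i
    obtain ⟨b, hb⟩ := hne 2
    have h1 := hz i 2 hi
    have h2 := hU i 2 hi
    grind
  obtain ⟨a0, ha0, b0, hb0, hab0⟩ := hdiff 0 (by decide)
  obtain ⟨a1, ha1, b1, hb1, hab1⟩ := hdiff 1 (by decide)
  -- choose Q
  obtain ⟨q, hq⟩ : ∃ q : {s // s ∈ S 2} → ℂ,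
      (polyOfCoeffs (S 2) q).eval 1 ≠ 0 ∧
      (polyOfCoeffs (S 2) q).derivative.eval 1 ≠ a0 * (polyOfCoeffs (S 2) q).eval 1 ∧
      (polyOfCoeffs (S 2) q).derivative.eval 1 ≠ a1 * (polyOfCoeffs (S 2) q).eval 1 ∧
      (u ∈ S 2 → (polyOfCoeffs (S 2) q).coeff u ≠ 0) ∧
      ((∃ b ∈ S 2, b ≠ u) → (polyOfCoeffs (S 2) q).eval 1 ≠ (polyOfCoeffs (S 2) q).coeff u) ∧
      (∀ ζ : ℂ, ζ ^ u = 1 → (∃ b ∈ S 2, ζ ^ b ≠ 1) →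
        (polyOfCoeffs (S 2) q).eval ζ ≠ (polyOfCoeffs (S 2) q).eval 1) := by
    let W : Set ({s // s ∈ S 2} → ℂ) :=
      ({fun _ => (1 : ℂ), fun s : {s // s ∈ S 2} => ((s : ℕ) : ℂ) - (a0 : ℂ),
        fun s : {s // s ∈ S 2} => ((s : ℕ) : ℂ) - (a1 : ℂ),
        fun s : {s // s ∈ S 2} => (if (s : ℕ) = u then 1 else 0 : ℂ),
        fun s : {s // s ∈ S 2} => (1 : ℂ) - (if (s : ℕ) = u then 1 else 0 : ℂ)} ∪
        ((fun (ζ : ℂ) (s : {s // s ∈ S 2}) => ζ ^ (s : ℕ) - 1) '' {ζ : ℂ | ζ ^ u = 1})) ∩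
        {w | ∃ s, w s ≠ 0}
    have hWf : W.Finite := by
      apply Set.Finite.inter_of_left
      apply Set.Finite.union
      · simp
      · apply Set.Finite.image
        apply (Polynomial.nthRoots u (1 : ℂ)).toFinset.finite_toSet.subset
        intro ζ hζ
        simpa [mem_nthRoots (by omega : 0 < u)] using hζ
    obtain ⟨q, hq⟩ := avoid W hWf (fun w hw => hw.2)
    refine ⟨q, ?_, ?_, ?_, ?_, ?_, ?_⟩
    · have := hq (fun _ => 1) ⟨by simp, ⟨b0, hb0⟩, by simp⟩
      rw [poly_eval]; simpa using this
    · have := hq (fun s : {s // s ∈ S 2} => ((s : ℕ) : ℂ) - (a0 : ℂ)) ⟨by simp, ⟨b0, hb0⟩, by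
        simp only [ne_eq, sub_eq_zero]; exact_mod_cast hab0.symm⟩
      rw [poly_eval, poly_deriv, Finset.mul_sum, ← sub_ne_zero, ← Finset.sum_sub_distrib]
      convert this using 3
      simp; ring
    · have := hq (fun s : {s // s ∈ S 2} => ((s : ℕ) : ℂ) - (a1 : ℂ)) ⟨by simp, ⟨b1, hb1⟩, by
        simp only [ne_eq, sub_eq_zero]; exact_mod_cast hab1.symm⟩
      rw [poly_eval, poly_deriv, Finset.mul_sum, ← sub_ne_zero, ← Finset.sum_sub_distrib]
      convert this using 3
      simp; ring
    · intro hu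
      have := hq (fun s : {s // s ∈ S 2} => (if (s : ℕ) = u then 1 else 0 : ℂ)) ⟨by simp, ⟨u, hu⟩, by simp⟩
      rw [poly_coeff]; exact this
    · rintro ⟨b, hb, hbu⟩
      have := hq (fun s : {s // s ∈ S 2} => (1 : ℂ) - (if (s : ℕ) = u then 1 else 0 : ℂ)) ⟨by simp, ⟨b, hb⟩, by simp [hbu]⟩
      rw [poly_eval, poly_coeff, ← sub_ne_zero, ← Finset.sum_sub_distrib]
      convert this using 3
      simp only [one_pow]; ring
    · rintro ζ hζ ⟨b, hb, hbu⟩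
      have := hq (fun s => ζ ^ (s : ℕ) - 1) ⟨Or.inr ⟨ζ, hζ, rfl⟩, ⟨b, hb⟩, by
        simpa [sub_eq_zero] using hbu⟩
      rw [poly_eval, poly_eval, ← sub_ne_zero, ← Finset.sum_sub_distrib]
      convert this using 3
      simp only [one_pow]; ring
  set Q := polyOfCoeffs (S 2) q with hQdef
  obtain ⟨hQ1, hQa0, hQa1, hQu, hQl, hQζ⟩ := hq
  -- the finite exceptional set
  let E : Set ℂ := {r | r ≠ 1 ∧ ∀ a ∈ S 0, r ^ a * Q.eval 1 = Q.eval r}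
  have hE : E.Finite := by
    have hp : (C (Q.eval 1) * X ^ a0 - Q : ℂ[X]) ≠ 0 := by
      intro h
      have := congrArg (fun p => p.derivative.eval 1) h
      simp [derivative_X_pow] at this
      apply hQa0
      linear_combination -this
    apply (C (Q.eval 1) * X ^ a0 - Q : ℂ[X]).roots.toFinset.finite_toSet.subset
    intro r hr
    simp only [Finset.mem_coe, Multiset.mem_toFinset, mem_roots hp, IsRoot.def]
    have := hr.2 a0 ha0
    simp
    linear_combination this
  have hE1 : ∀ r ∈ E, ∃ b ∈ S 1, r ^ b * Q.eval 1 ≠ Q.eval r := by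
    rintro r ⟨hr1, hr⟩
    by_contra hcon
    push Not at hcon
    apply hr1
    have hQr : Q.eval r = Q.eval 1 := by
      rcases hz 0 1 (by decide) with h | h
      · simpa using (hr 0 h).symm
      · simpa using (hcon 0 h).symm
    have hp0 : ∀ a ∈ S 0, r ^ a = 1 := fun a ha => by
      have := hr a ha
      rw [hQr] at this
      exact mul_right_cancel₀ hQ1 (by rw [this, one_mul])
    have hp1 : ∀ a ∈ S 1, r ^ a = 1 := fun a ha => by
      have := hcon a ha
      rw [hQr] at this
      exact mul_right_cancel₀ hQ1 (by rw [this, one_mul])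
    have hru : r ^ u = 1 := by
      rcases hU 0 1 (by decide) with h | h
      · exact hp0 u h
      · exact hp1 u h
    have hp2 : ∀ a ∈ S 2, r ^ a = 1 := by
      by_contra hcon
      push Not at hcon
      exact hQζ r hru hcon hQr
    have : orderOf r ∣ ((S 0 ∪ S 1 ∪ S 2).filter (fun s => s ≠ 0)).gcd id := by
      apply Finset.dvd_gcd
      intro b hb
      simp only [Finset.mem_filter, Finset.mem_union] at hb
      apply orderOf_dvd_of_pow_eq_one
      rcases hb.1 with (h | h) | h
      · exact hp0 b h
      · exact hp1 b h
      · exact hp2 b h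
    rw [hgcd, Nat.dvd_one, orderOf_eq_one_iff] at this
    exact this
  -- evaluating the linear forms
  have hform : ∀ i (p : {s // s ∈ S i} → ℂ) (r : ℂ),
      ∑ s : {s // s ∈ S i}, p s * (r ^ (s : ℕ) * Q.eval 1 - Q.eval r) =
      (polyOfCoeffs (S i) p).eval r * Q.eval 1 - (polyOfCoeffs (S i) p).eval 1 * Q.eval r := by
    intro i p r
    rw [poly_eval (S i) p r, poly_eval (S i) p 1, Finset.sum_mul, Finset.sum_mul, ← Finset.sum_sub_distrib]
    refine Finset.sum_congr rfl fun s _ => ?_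
    simp only [one_pow]; ring
  have hformd : ∀ i (p : {s // s ∈ S i} → ℂ),
      ∑ s : {s // s ∈ S i}, p s * ((s : ℕ) * Q.eval 1 - Q.derivative.eval 1) =
      (polyOfCoeffs (S i) p).derivative.eval 1 * Q.eval 1 -
        (polyOfCoeffs (S i) p).eval 1 * Q.derivative.eval 1 := by
    intro i p
    rw [poly_eval (S i) p 1, poly_deriv (S i) p, Finset.sum_mul, Finset.sum_mul, ← Finset.sum_sub_distrib]
    refine Finset.sum_congr rfl fun s _ => ?_
    simp only [one_pow]; ring
  have hforml : ∀ i (p : {s // s ∈ S i} → ℂ),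
      ∑ s : {s // s ∈ S i}, p s * ((if (s : ℕ) = u then 1 else 0) * Q.eval 1 - Q.coeff u) =
      (polyOfCoeffs (S i) p).coeff u * Q.eval 1 -
        (polyOfCoeffs (S i) p).eval 1 * Q.coeff u := by
    intro i p
    rw [poly_eval (S i) p 1, poly_coeff (S i) p u, Finset.sum_mul, Finset.sum_mul, ← Finset.sum_sub_distrib]
    refine Finset.sum_congr rfl fun s _ => ?_
    simp only [one_pow]; ring
  have hDD1 : ∀ P : ℂ[X], (DD P Q 1).eval 1 =
      P.derivative.eval 1 * Q.eval 1 - P.eval 1 * Q.derivative.eval 1 := by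
    intro P
    have := congrArg (fun p => p.derivative.eval 1) (DD_mul P Q 1)
    simpa [derivative_mul] using this
  have hDDr : ∀ (P : ℂ[X]) (r : ℂ), (r - 1) * (DD P Q 1).eval r =
      P.eval r * Q.eval 1 - P.eval 1 * Q.eval r := by
    intro P r
    have := congrArg (fun p => p.eval r) (DD_mul P Q 1)
    simpa using this
  -- choose P₁
  obtain ⟨p1, hp1⟩ := avoid
    ({fun s : {s // s ∈ S 1} => ((s : ℕ) * Q.eval 1 - Q.derivative.eval 1)} ∪
      (fun (r : ℂ) (s : {s // s ∈ S 1}) => r ^ (s : ℕ) * Q.eval 1 - Q.eval r) '' E)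
    ((Set.finite_singleton _).union (hE.image _)) (by
      rintro w (rfl | ⟨r, hr, rfl⟩)
      · exact ⟨⟨a1, ha1⟩, sub_ne_zero.2 hQa1.symm⟩
      · obtain ⟨b, hb, hbr⟩ := hE1 r hr
        exact ⟨⟨b, hb⟩, sub_ne_zero.2 hbr⟩)
  have hP1a := hp1 _ (Or.inl rfl)
  rw [hformd, ← hDD1] at hP1a
  have hP1b : ∀ r ∈ E, (DD (polyOfCoeffs (S 1) p1) Q 1).eval r ≠ 0 := by
    intro r hr h
    have h1 := hp1 _ (Or.inr ⟨r, hr, rfl⟩)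
    rw [hform, ← hDDr, h, mul_zero] at h1
    exact h1 rfl
  set D1 := DD (polyOfCoeffs (S 1) p1) Q 1
  have hD1 : D1 ≠ 0 := by
    intro h; rw [h] at hP1a; simp at hP1a
  -- choose P₀
  obtain ⟨p0, hp0⟩ := avoid
    ({fun s : {s // s ∈ S 0} => ((s : ℕ) * Q.eval 1 - Q.derivative.eval 1)} ∪
      {fun s : {s // s ∈ S 0} => ((if (s : ℕ) = u then 1 else 0) * Q.eval 1 - Q.coeff u)} ∪
      (fun (r : ℂ) (s : {s // s ∈ S 0}) => r ^ (s : ℕ) * Q.eval 1 - Q.eval r) ''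
        (D1.roots.toFinset \ {1} : Set ℂ))
    (((Set.finite_singleton _).union (Set.finite_singleton _)).union
      ((Finset.finite_toSet _).sdiff.image _)) (by
      rintro w ((rfl | rfl) | ⟨r, ⟨hr, hr1⟩, rfl⟩)
      · exact ⟨⟨a0, ha0⟩, sub_ne_zero.2 hQa0.symm⟩
      · by_cases hu2 : u ∈ S 2
        · by_cases hb : ∃ b ∈ S 0, b ≠ u
          · obtain ⟨b, hb, hbu⟩ := hb
            exact ⟨⟨b, hb⟩, by simpa [hbu] using hQu hu2⟩
          · push Not at hb
            have hau := hb a0 ha0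
            have := hQl ⟨b0, hb0, by omega⟩
            exact ⟨⟨a0, ha0⟩, by simpa [hau, sub_eq_zero] using this⟩
        · have hu0 := (hU 0 2 (by decide)).resolve_right hu2
          have : Q.coeff u = 0 := by
            rw [hQdef, poly_coeff]
            apply Finset.sum_eq_zero
            rintro ⟨s, hs⟩ _
            have : s ≠ u := by rintro rfl; exact hu2 hs
            simp [this]
          exact ⟨⟨u, hu0⟩, by simpa [this] using hQ1⟩
      · by_contra hcon
        push Not at hcon
        refine hP1b r ⟨hr1, fun a ha => ?_⟩ ?_
        · exact sub_eq_zero.1 (hcon ⟨a, ha⟩)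
        · simpa [hD1] using hr)
  have hP0a := hp0 _ (Or.inl (Or.inl rfl))
  rw [hformd, ← hDD1] at hP0a
  have hP0l := hp0 _ (Or.inl (Or.inr rfl))
  rw [hforml, ← DD_coeff 1 hu1 (poly_natDegree _ _ (hle 0)) (poly_natDegree _ _ (hle 2))] at hP0l
  let c : (Σ i : Fin 3, {s // s ∈ S i}) → ℂ := fun x =>
    match x with
    | ⟨0, s⟩ => p0 s
    | ⟨1, s⟩ => p1 s
    | ⟨2, s⟩ => q s
  refine ⟨c, hP0l, ?_⟩
  change IsCoprime (DD (polyOfCoeffs (S 0) p0) Q 1) D1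
  rw [isCoprime_iff_aeval_ne_zero_of_isAlgClosed (k := ℂ) (K := ℂ)]
  intro r
  simp only [coe_aeval_eq_eval]
  by_cases hr1 : r = 1
  · left; rw [hr1]; exact hP0a
  by_cases hr : D1.eval r = 0
  · left
    intro h
    have h1 := hp0 _ (Or.inr ⟨r, ⟨by simpa [hD1] using hr, hr1⟩, rfl⟩)
    rw [hform, ← hDDr, h, mul_zero] at h1
    exact h1 rfl
  · right; exact hr

lemma pair_open (S : Fin 3 → Finset ℕ) (hne : ∀ i, (S i).Nonempty) (i j : Fin 3) (hij : i ≠ j)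
    (h0 : 0 ∈ S i ∨ 0 ∈ S j) :
    ∃ G : MvPolynomial (Σ i : Fin 3, {s // s ∈ S i}) ℂ, G ≠ 0 ∧
      ∀ c : (Σ i : Fin 3, {s // s ∈ S i}) → ℂ, MvPolynomial.eval c G ≠ 0 →
        IsCoprime (polyOfCoeffs (S i) (fun s => c ⟨i, s⟩))
          (polyOfCoeffs (S j) (fun s => c ⟨j, s⟩)) := by
  classical
  obtain ⟨a, b, ha, hab⟩ := pair_coprime (S i) (S j) (hne i) (hne j) h0
  let d : ∀ k : Fin 3, {s // s ∈ S k} → ℂ :=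
    Function.update (Function.update (fun _ _ => 0) i a) j b
  have hdj : d j = b := by simp [d]
  have hdi : d i = a := by simp [d, hij]
  let c₀ : (Σ i : Fin 3, {s // s ∈ S i}) → ℂ := fun x => d x.1 x.2
  have e1 : (univPoly S i).map (MvPolynomial.eval c₀) = polyOfCoeffs (S i) a := by
    rw [univPoly_map, ← hdi]
  have e2 : (univPoly S j).map (MvPolynomial.eval c₀) = polyOfCoeffs (S j) b := by
    rw [univPoly_map, ← hdj]
  obtain ⟨G, hG, h⟩ := open_coprime (f := univPoly S i) (g := univPoly S j)
    (m := (S i).max' (hne i)) (n := (S j).max' (hne j))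
    (univPoly_natDegree S i (fun s hs => (S i).le_max' s hs))
    (univPoly_natDegree S j (fun s hs => (S j).le_max' s hs)) c₀
    (by
      rw [e1, poly_coeff_mem (S i) a ⟨(S i).max' (hne i), (S i).max'_mem _⟩]
      exact ha _) (by rw [e1, e2]; exact hab)
  refine ⟨G, hG, fun c hc => ?_⟩
  have := (h c hc).2
  rwa [univPoly_map, univPoly_map] at this

lemma birational_open (S : Fin 3 → Finset ℕ) (hne : ∀ i, (S i).Nonempty)
    (hgcd : ((S 0 ∪ S 1 ∪ S 2).filter (fun s => s ≠ 0)).gcd id = 1)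
    {u : ℕ} (hu1 : 1 ≤ u) (hle : ∀ i, ∀ s ∈ S i, s ≤ u)
    (hz : ∀ i j, i ≠ j → 0 ∈ S i ∨ 0 ∈ S j) (hU : ∀ i j, i ≠ j → u ∈ S i ∨ u ∈ S j) :
    ∃ G : MvPolynomial (Σ i : Fin 3, {s // s ∈ S i}) ℂ, G ≠ 0 ∧
      ∀ c : (Σ i : Fin 3, {s // s ∈ S i}) → ℂ, MvPolynomial.eval c G ≠ 0 →
      (DD (polyOfCoeffs (S 0) (fun s => c ⟨0, s⟩)) (polyOfCoeffs (S 2) (fun s => c ⟨2, s⟩)) 1).coeff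
        (u - 1) ≠ 0 ∧
      IsCoprime
      (DD (polyOfCoeffs (S 0) (fun s => c ⟨0, s⟩)) (polyOfCoeffs (S 2) (fun s => c ⟨2, s⟩)) 1)
      (DD (polyOfCoeffs (S 1) (fun s => c ⟨1, s⟩)) (polyOfCoeffs (S 2) (fun s => c ⟨2, s⟩)) 1) := by
  obtain ⟨c₀, h1, h2⟩ := exists_special S hne hgcd hu1 hle hz hU
  have e : ∀ i (c : (Σ i : Fin 3, {s // s ∈ S i}) → ℂ),
      (DD (univPoly S i) (univPoly S 2) 1).map (MvPolynomial.eval c) =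
      DD (polyOfCoeffs (S i) (fun s => c ⟨i, s⟩)) (polyOfCoeffs (S 2) (fun s => c ⟨2, s⟩)) 1 := by
    intro i c
    rw [DD_map, map_one, univPoly_map, univPoly_map]
  have hd : ∀ i, (DD (univPoly S i) (univPoly S 2) 1).natDegree ≤ u - 1 := fun i =>
    DD_natDegree 1 (univPoly_natDegree S i (hle i)) (univPoly_natDegree S 2 (hle 2))
  obtain ⟨G, hG, h⟩ := open_coprime (hd 0) (hd 1) c₀ (by rw [e]; exact h1)
    (by rw [e, e]; exact h2)
  refine ⟨G, hG, fun c hc => ?_⟩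
  have := h c hc
  rwa [e, e] at this

end Helpers

/-- Case (1A): if the convex hull of `B_i ∪ B_j` equals `[0, u]` for every pair `i ≠ j`,
then the implicit Newton polygon is the triangle with vertices `(0,0)`, `(u,0)`, `(0,u)`. -/
theorem implicit_polygon_triangle (S : Fin 3 → Finset ℕ) (hne : ∀ i, (S i).Nonempty)
    (hgcd : ((S 0 ∪ S 1 ∪ S 2).filter (fun s => s ≠ 0)).gcd id = 1)
    (u : ℕ)
    (hu : u = max ((S 0).max' (hne 0)) (max ((S 1).max' (hne 1)) ((S 2).max' (hne 2))))
    (hu1 : 1 ≤ u)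
    (hall : ∀ i j : Fin 3, i ≠ j →
      min ((S i).min' (hne i)) ((S j).min' (hne j)) = 0 ∧
      max ((S i).max' (hne i)) ((S j).max' (hne j)) = u) :
    ∃ G : MvPolynomial (Σ i : Fin 3, {s // s ∈ S i}) ℂ, G ≠ 0 ∧
      ∀ c : (Σ i : Fin 3, {s // s ∈ S i}) → ℂ, MvPolynomial.eval c G ≠ 0 →
        ∀ φ : MvPolynomial (Fin 2) ℂ, Irreducible φ → vanishesSame S c φ →
          newtonPolygon φ =
            convexHull ℝ {((0 : ℝ), (0 : ℝ)), ((u : ℝ), (0 : ℝ)), ((0 : ℝ), (u : ℝ))} := by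
  have hle : ∀ i, ∀ s ∈ S i, s ≤ u := by
    intro i s hs
    have h1 := (S i).le_max' s hs
    have : ∃ j, i ≠ j := ⟨i + 1, by fin_cases i <;> decide⟩
    obtain ⟨j, hj⟩ := this
    have h2 := (hall i j hj).2
    exact h1.trans ((le_max_left _ _).trans h2.le)
  have hz : ∀ i j, i ≠ j → 0 ∈ S i ∨ 0 ∈ S j := by
    intro i j hij
    have h := (hall i j hij).1
    have hi := (S i).min'_mem (hne i)
    have hj := (S j).min'_mem (hne j)
    rcases min_choice ((S i).min' (hne i)) ((S j).min' (hne j)) with h' | h'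
    · left; rw [h] at h'; rwa [← h'] at hi
    · right; rw [h] at h'; rwa [← h'] at hj
  have hU : ∀ i j, i ≠ j → u ∈ S i ∨ u ∈ S j := by
    intro i j hij
    have h := (hall i j hij).2
    have hi := (S i).max'_mem (hne i)
    have hj := (S j).max'_mem (hne j)
    rcases max_choice ((S i).max' (hne i)) ((S j).max' (hne j)) with h' | h'
    · left; rw [h] at h'; rwa [← h'] at hi
    · right; rw [h] at h'; rwa [← h'] at hj
  obtain ⟨G01, n01, g01⟩ := pair_open S hne 0 1 (by decide) (hz 0 1 (by decide))
  obtain ⟨G02, n02, g02⟩ := pair_open S hne 0 2 (by decide) (hz 0 2 (by decide))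
  obtain ⟨G12, n12, g12⟩ := pair_open S hne 1 2 (by decide) (hz 1 2 (by decide))
  obtain ⟨Gb, nb, gb⟩ := birational_open S hne hgcd hu1 hle hz hU
  refine ⟨G01 * G02 * G12 * Gb * ∏ x, MvPolynomial.X x, ?_, ?_⟩
  · refine mul_ne_zero (mul_ne_zero (mul_ne_zero (mul_ne_zero n01 n02) n12) nb) ?_
    rw [Finset.prod_ne_zero_iff]
    exact fun x _ => MvPolynomial.X_ne_zero x
  intro c hc φ hφ hv
  simp only [map_mul, map_prod, MvPolynomial.eval_X, mul_ne_zero_iff,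
    Finset.prod_ne_zero_iff] at hc
  obtain ⟨⟨⟨⟨h01, h02⟩, h12⟩, hb⟩, hx⟩ := hc
  have c01 := g01 c h01
  have c02 := g02 c h02
  have c12 := g12 c h12
  have cb := gb c hb
  have hd : ∀ i, (polyOfCoeffs (S i) (fun s => c ⟨i, s⟩)).natDegree ≤ u := fun i =>
    poly_natDegree _ _ (hle i)
  have hd' : ∀ i, u ∈ S i → u ≤ (polyOfCoeffs (S i) (fun s => c ⟨i, s⟩)).natDegree := by
    intro i hi
    apply le_natDegree_of_ne_zero
    rw [poly_coeff_mem (S i) (fun s => c ⟨i, s⟩) ⟨u, hi⟩]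
    exact hx _ (Finset.mem_univ _)
  have hdd : ∀ i j, i ≠ j → max (polyOfCoeffs (S i) (fun s => c ⟨i, s⟩)).natDegree
      (polyOfCoeffs (S j) (fun s => c ⟨j, s⟩)).natDegree = u := by
    intro i j hij
    refine le_antisymm (max_le (hd i) (hd j)) ?_
    rcases hU i j hij with h | h
    · exact (hd' i h).trans (le_max_left _ _)
    · exact (hd' j h).trans (le_max_right _ _)
  have d01 := hdd 0 1 (by decide)
  have d02 := hdd 0 2 (by decide)
  have d12 := hdd 1 2 (by decide)
  have hQ : polyOfCoeffs (S 2) (fun s => c ⟨2, s⟩) ≠ 0 := by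
    intro h
    have := cb.1
    rw [h] at this
    simp [DD] at this
  have htop := birational hu1 hQ (hd 0) (hd 1) (hd 2) cb.1 cb.2
  obtain ⟨s0, s1, s2, s3⟩ := curve_support hu1 c01 c02 c12 d01 d02 d12 htop hφ hv
  exact newton_triangle hu1 s0 s1 s2 s3
end
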